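/- (Application to the fractional system) For i=1,2 let 1 < α_i ≤ 2, β_i > 0, 0 ≤ η_i ≤ 1 with β_iΓ(α_i) < (1−η_i)^{α_i−1}, let b_i satisfy η_i ≤ b_i < 1 and β_iΓ(α_i) > (b_i−η_i)^{α_i−1}, and define k_i(t,s) = β_i + 1_{{s≤η_i}}(η_i−s)^{α_i−1}/Γ(α_i) − 1_{{s≤t}}(t−s)^{α_i−1}/Γ(α_i) and c_i = min{ (β_iΓ(α_i) − (b_i−η_i)^{α_i−1})/((1−η_i)^{α_i−1} − β_iΓ(α_i)), (β_iΓ(α_i) − (b_i−η_i)^{α_i−1})/(β_iΓ(α_i) + η_i^{α_i−1}) }. Let f_1,f_2:[0,1]×ℝ×ℝ→[0,∞) be continuous, and define m_i > 0 by 1/m_i = sup_{t∈[0,1]} ∫₀¹ |k_i(t,s)| ds and M_i > 0 by 1/M_i = inf_{t∈[0,b_i]} ∫₀^{b_i} k_i(t,s) ds (assumed positive). If there exist ρ₁,ρ₂,r₁,r₂ ∈ (0,∞) with ρ₁ < r₁ and ρ₂ < r₂ such that f₁(t,u,v) < m₁ρ₁ and f₂(t,u,v) < m₂ρ₂ for all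 t∈[0,1], u∈[−ρ₁,ρ₁], v∈[−ρ₂,ρ₂], and f₁(t,u,v) > M₁r₁ for all t∈[0,b₁], u∈[r₁,r₁/c₁], v∈[−r₂/c₂,r₂/c₂], and f₂(t,u,v) > M₂r₂ for all t∈[0,b₂], u∈[−r₁/c₁,r₁/c₁], v∈[r₂,r₂/c₂], then the system u(t) = ∫₀¹ k₁(t,s) f₁(s,u(s),v(s)) ds, v(t) = ∫₀¹ k₂(t,s) f₂(s,u(s),v(s)) ds has at least one solution (u,v) in the cone K with max(‖u‖_∞,‖v‖_∞) > 0. -/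

import Mathlib

open MeasureTheory Set Real

noncomputable def supNorm (w : ℝ → ℝ) : ℝ := ⨆ t : Set.Icc (0:ℝ) 1, |w t.1|

noncomputable def infOn (a b : ℝ) (w : ℝ → ℝ) : ℝ := ⨅ t : Set.Icc a b, w t.1

/-- Membership in the cone `K ⊆ C[0,1] × C[0,1]`. -/
def inCone (a₁ b₁ c₁ a₂ b₂ c₂ : ℝ) (u v : ℝ → ℝ) : Prop :=
  ContinuousOn u (Set.Icc 0 1) ∧ ContinuousOn v (Set.Icc 0 1) ∧
    c₁ * supNorm u ≤ infOn a₁ b₁ u ∧ c₂ * supNorm v ≤ infOn a₂ b₂ v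

/-- `(u, v)` solves the system of Hammerstein integral equations. -/
def isSolution (k₁ k₂ : ℝ → ℝ → ℝ) (f₁ f₂ : ℝ → ℝ → ℝ → ℝ) (u v : ℝ → ℝ) : Prop :=
  (∀ t ∈ Set.Icc (0:ℝ) 1, u t = ∫ s in (0:ℝ)..1, k₁ t s * f₁ s (u s) (v s)) ∧
    (∀ t ∈ Set.Icc (0:ℝ) 1, v t = ∫ s in (0:ℝ)..1, k₂ t s * f₂ s (u s) (v s))

/-!
Solutions are the fixed points of a Hammerstein operator `T`, which maps the cone into itself since
`|kᵢ| ≤ Φᵢ` everywhere and `cᵢ Φᵢ ≤ kᵢ` for `t ≤ bᵢ`. Where `maxᵢ ‖uᵢ‖ / ρᵢ = 1`, smallness of the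
`fᵢ` excludes `T x = μ x` with `μ > 1`; where `maxᵢ min_[0, bᵢ] uᵢ / rᵢ = 1`, largeness excludes
`x = T x + μ e` with `μ > 0`, for `e` the constant tuple.

In place of the fixed point index: the rays of the cone are parametrised by a base `{ℓ = 1}`, and
`τ ∈ [0, 1]` interpolates between the two gauges, so that `(y, τ)` stands for a point of the ray
through `y`. Moving `τ` by `1 - ℓ` of the rescaled image and applying Schauder's theorem to
`base × [0, 1]` yields a point where `τ` stalls: either a fixed point of `T`, or an end of `[0, 1]`,
which the two boundary conditions exclude.

Schauder's theorem reduces to Brouwer's, and that to the absence of smooth retractions `id + g` onto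
the sphere: `∫ det (1 + t Dg)` over the ball is a polynomial in `t`, equal to the volume of the ball
for small `t > 0`, hence also at `t = 1`, whereas the derivative of a retraction is singular.
-/

section NoRetraction

open Metric Polynomial Topology
open scoped NNReal

theorem exists_weights_eval_eq_sum {F : Type*} [Field F] (s : Finset F) (a : F) :
    ∃ w : F → F, ∀ p : F[X], p.degree < s.card → p.eval a = ∑ t ∈ s, w t * p.eval t := by
  classical
  refine ⟨fun t => (Lagrange.basis s id t).eval a, fun p hp => ?_⟩
  conv_lhs => rw [Lagrange.eq_interpolate (v := id) (injOn_id _) hp, Lagrange.interpolate_apply]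
  simp [eval_finsetSum, mul_comm]

theorem exists_polynomial_eval_eq_det_id_add_smul {𝕜 V : Type*} [Field 𝕜] [AddCommGroup V]
    [Module 𝕜 V] [FiniteDimensional 𝕜 V] (A : V →ₗ[𝕜] V) :
    ∃ p : 𝕜[X], p.natDegree ≤ Module.finrank 𝕜 V ∧
      ∀ t, p.eval t = LinearMap.det (LinearMap.id + t • A) := by
  have b := Module.finBasis 𝕜 V
  refine ⟨((X : 𝕜[X]) • (LinearMap.toMatrix b b A).map C + (1 : Matrix _ _ 𝕜).map C).det,
    by simpa only [Fintype.card_fin] using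
      natDegree_det_X_add_C_le (LinearMap.toMatrix b b A) (1 : Matrix _ _ 𝕜), fun t => ?_⟩
  rw [← LinearMap.det_toMatrix b, map_add, map_smul, LinearMap.toMatrix_id, ← coe_evalRingHom,
    RingHom.map_det]
  congr 1
  ext i j
  simp [Matrix.one_apply, apply_ite, add_comm, mul_comm t]

variable {E : Type*} [NormedAddCommGroup E]

theorem injOn_id_add_of_lipschitzOnWith {K : ℝ≥0} {s : Set E} {g : E → E}
    (hg : LipschitzOnWith K g s) (hK : K < 1) : InjOn (fun x => x + g x) s := by
  intro x hx y hy (hxy : x + g x = y + g y)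
  have hdist : dist x y = dist (g y) (g x) := by
    rw [dist_eq_norm, dist_eq_norm, show x - y = g y - g x by
      rw [sub_eq_sub_iff_add_eq_add, hxy, add_comm]]
  have hle : dist x y ≤ K * dist x y := by
    simpa only [hdist.symm, dist_comm y x] using hg.dist_le_mul y hy x hx
  exact dist_le_zero.1 (by nlinarith [dist_nonneg (x := x) (y := y), NNReal.coe_lt_one.2 hK])

variable [NormedSpace ℝ E]

theorem isOpen_image_id_add_of_lipschitzOnWith [CompleteSpace E] {K : ℝ≥0} {s : Set E} {g : E → E}
    (hs : IsOpen s) (hg : LipschitzOnWith K g s) (hK : K < 1) :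
    IsOpen ((fun x => x + g x) '' s) := by
  have happrox : ApproximatesLinearOn (fun x => x + g x)
      (ContinuousLinearEquiv.refl ℝ E : E →L[ℝ] E) s K := fun x hx y hy => by
    simpa [add_sub_add_comm, ← dist_eq_norm] using hg.dist_le_mul x hx y hy
  refine happrox.open_image (ContinuousLinearEquiv.refl ℝ E).toNonlinearRightInverse hs ?_
  rcases subsingleton_or_nontrivial E with hE | hE
  · exact Or.inl hE
  · exact Or.inr (by simpa [ContinuousLinearEquiv.toNonlinearRightInverse] using hK)

theorem image_ball_id_add_of_lipschitzOnWith [ProperSpace E] {K : ℝ≥0} {g : E → E}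
    (hg : LipschitzOnWith K g (closedBall 0 1)) (hK : K < 1)
    (hmaps : ∀ x ∈ closedBall (0 : E) 1, x + g x ∈ closedBall (0 : E) 1)
    (hzero : ∀ x ∈ sphere (0 : E) 1, g x = 0) :
    (fun x => x + g x) '' ball 0 1 = ball 0 1 := by
  set f : E → E := fun x => x + g x
  have hinj : InjOn f (closedBall 0 1) := injOn_id_add_of_lipschitzOnWith hg hK
  have hfix : ∀ x ∈ sphere (0 : E) 1, f x = x := fun x hx => by simp [f, hzero x hx]
  have hball : f '' ball 0 1 ⊆ ball 0 1 := by
    rintro _ ⟨x, hx, rfl⟩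
    by_contra hfx
    have hsph : f x ∈ sphere (0 : E) 1 :=
      le_antisymm (hmaps x (ball_subset_closedBall hx)) (not_lt.1 hfx)
    have hfxx := hinj (sphere_subset_closedBall hsph) (ball_subset_closedBall hx) (hfix _ hsph)
    exact hfx (hfxx.symm ▸ hx)
  have hcompact : IsCompact (f '' closedBall 0 1) :=
    (isCompact_closedBall 0 1).image_of_continuousOn (continuousOn_id.add hg.continuousOn)
  refine hball.antisymm (((convex_ball (0 : E) 1).isPreconnected).subset_of_closure_inter_subset
    (isOpen_image_id_add_of_lipschitzOnWith isOpen_ball (hg.mono ball_subset_closedBall) hK)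
    ⟨f 0, hball ⟨0, mem_ball_self one_pos, rfl⟩, 0, mem_ball_self one_pos, rfl⟩ ?_)
  rintro y ⟨hy, hyball⟩
  obtain ⟨x, hx, rfl⟩ := hcompact.isClosed.closure_subset_iff.2
    (image_mono ball_subset_closedBall) hy
  refine ⟨x, mem_ball.2 (lt_of_le_of_ne hx fun hx1 => ?_), rfl⟩
  rw [hfix x hx1] at hyball
  exact (mem_ball.1 hyball).ne hx1

theorem exists_pos_forall_det_id_add_pos (E : Type*) [NormedAddCommGroup E] [NormedSpace ℝ E] :
    ∃ ε : ℝ, 0 < ε ∧ ∀ A : E →L[ℝ] E, ‖A‖ < ε → 0 < (ContinuousLinearMap.id ℝ E + A).det := by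
  have hopen : IsOpen {A : E →L[ℝ] E | 0 < (ContinuousLinearMap.id ℝ E + A).det} :=
    isOpen_lt continuous_const (ContinuousLinearMap.continuous_det.comp (continuous_const_add _))
  obtain ⟨ε, hε, hball⟩ := Metric.isOpen_iff.1 hopen 0 (by simp [ContinuousLinearMap.det])
  exact ⟨ε, hε, fun A hA => hball (mem_ball_zero_iff.2 hA)⟩

variable [FiniteDimensional ℝ E]

theorem setIntegral_det_id_add_fderiv_of_lipschitzOnWith [MeasurableSpace E] [BorelSpace E]
    (μ : Measure E) [μ.IsAddHaarMeasure] {g : E → E} {K : ℝ≥0}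
    (hg : LipschitzOnWith K g (closedBall 0 1)) (hK : K < 1)
    (hdiff : ∀ x ∈ ball (0 : E) 1, DifferentiableAt ℝ g x)
    (hmaps : ∀ x ∈ closedBall (0 : E) 1, x + g x ∈ closedBall (0 : E) 1)
    (hzero : ∀ x ∈ sphere (0 : E) 1, g x = 0)
    (hdet : ∀ x ∈ ball (0 : E) 1, 0 < (ContinuousLinearMap.id ℝ E + fderiv ℝ g x).det) :
    ∫ x in ball 0 1, (ContinuousLinearMap.id ℝ E + fderiv ℝ g x).det ∂μ = μ.real (ball 0 1) := by
  have hderiv : ∀ x ∈ ball (0 : E) 1, HasFDerivWithinAt (fun x => x + g x)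
      (ContinuousLinearMap.id ℝ E + fderiv ℝ g x) (ball 0 1) x := fun x hx =>
    ((hasFDerivAt_id x).add (hdiff x hx).hasFDerivAt).hasFDerivWithinAt
  have hcov := integral_image_eq_integral_abs_det_fderiv_smul μ measurableSet_ball hderiv
    ((injOn_id_add_of_lipschitzOnWith hg hK).mono ball_subset_closedBall) fun _ => (1 : ℝ)
  rw [image_ball_id_add_of_lipschitzOnWith hg hK hmaps hzero] at hcov
  simpa [setIntegral_congr_fun measurableSet_ball fun x hx => abs_of_pos (hdet x hx)]
    using hcov.symm

theorem exists_pos_forall_setIntegral_det_id_add_smul_fderiv [MeasurableSpace E] [BorelSpace E]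
    (μ : Measure E) [μ.IsAddHaarMeasure] {g : E → E} {K : ℝ≥0}
    (hg : LipschitzOnWith K g (closedBall 0 1))
    (hdiff : ∀ x ∈ ball (0 : E) 1, DifferentiableAt ℝ g x)
    (hmaps : ∀ x ∈ closedBall (0 : E) 1, x + g x ∈ closedBall (0 : E) 1)
    (hzero : ∀ x ∈ sphere (0 : E) 1, g x = 0) :
    ∃ δ : ℝ, 0 < δ ∧ ∀ t ∈ Ioo 0 δ,
      ∫ x in ball 0 1, (ContinuousLinearMap.id ℝ E + t • fderiv ℝ g x).det ∂μ =
        μ.real (ball 0 1) := by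
  obtain ⟨ε, hε, hdet⟩ := exists_pos_forall_det_id_add_pos E
  refine ⟨min 1 ε / (K + 1), by positivity, fun t ⟨ht0, ht⟩ => ?_⟩
  obtain ⟨ht1, htε⟩ := lt_min_iff.1 ((lt_div_iff₀ (by positivity)).1 ht)
  lift t to ℝ≥0 using ht0.le
  have hlip : LipschitzOnWith (t * K) (fun x => (t : ℝ) • g x) (closedBall 0 1) :=
    LipschitzOnWith.of_dist_le_mul fun x hx y hy => by
      rw [dist_smul₀, Real.norm_of_nonneg ht0.le, NNReal.coe_mul, mul_assoc]
      exact mul_le_mul_of_nonneg_left (hg.dist_le_mul x hx y hy) ht0.le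
  have hlt : t * K < 1 := by
    rw [← NNReal.coe_lt_coe, NNReal.coe_mul, NNReal.coe_one]
    nlinarith
  have hderiv : ∀ x ∈ ball (0 : E) 1, fderiv ℝ (fun x => (t : ℝ) • g x) x =
      (t : ℝ) • fderiv ℝ g x := fun x hx => fderiv_fun_const_smul (hdiff x hx) _
  have hconv : ∀ x ∈ closedBall (0 : E) 1, x + (t : ℝ) • g x ∈ closedBall (0 : E) 1 :=
    fun x hx => by
      convert! convex_closedBall (0 : E) 1 hx (hmaps x hx) (sub_nonneg.2 (by nlinarith)) ht0.le
        (sub_add_cancel 1 (t : ℝ)) using 1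
      module
  rw [← setIntegral_det_id_add_fderiv_of_lipschitzOnWith μ hlip hlt
    (fun x hx => (hdiff x hx).const_smul _) hconv (fun x hx => by simp [hzero x hx]) fun x hx => ?_]
  · exact setIntegral_congr_fun measurableSet_ball fun x hx => by simp only [hderiv x hx]
  · have hnorm := (hdiff x hx).hasFDerivAt.le_of_lipschitzOn
      (Filter.mem_of_superset (isOpen_ball.mem_nhds hx) ball_subset_closedBall) hg
    refine hdet _ ?_
    rw [hderiv x hx, norm_smul, Real.norm_of_nonneg ht0.le]
    nlinarith

theorem integrableOn_ball_det_id_add_smul_fderiv [MeasurableSpace E] [BorelSpace E] (μ : Measure E)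
    [IsFiniteMeasureOnCompacts μ] {U : Set E} (hU : IsOpen U) (hball : closedBall 0 1 ⊆ U)
    {g : E → E} (hg : ContDiffOn ℝ 1 g U) (t : ℝ) :
    IntegrableOn (fun x => (ContinuousLinearMap.id ℝ E + t • fderiv ℝ g x).det) (ball 0 1) μ := by
  have hcont : ContinuousOn (fun x => (ContinuousLinearMap.id ℝ E + t • fderiv ℝ g x).det)
      (closedBall 0 1) :=
    ContinuousLinearMap.continuous_det.comp_continuousOn
      (continuousOn_const.add
        (((hg.continuousOn_fderiv_of_isOpen hU le_rfl).mono hball).const_smul t))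
  exact (hcont.integrableOn_compact (isCompact_closedBall 0 1)).mono_set ball_subset_closedBall

theorem setIntegral_det_id_add_fderiv_eq_measureReal_ball [MeasurableSpace E] [BorelSpace E]
    (μ : Measure E) [μ.IsAddHaarMeasure] {U : Set E} (hU : IsOpen U) (hball : closedBall 0 1 ⊆ U)
    {g : E → E} (hg : ContDiffOn ℝ 1 g U)
    (hmaps : ∀ x ∈ closedBall (0 : E) 1, x + g x ∈ closedBall (0 : E) 1)
    (hzero : ∀ x ∈ sphere (0 : E) 1, g x = 0) :
    ∫ x in ball 0 1, (ContinuousLinearMap.id ℝ E + fderiv ℝ g x).det ∂μ = μ.real (ball 0 1) := by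
  obtain ⟨K, hK⟩ := (hg.mono hball).exists_lipschitzOnWith one_ne_zero (convex_closedBall 0 1)
    (isCompact_closedBall 0 1)
  have hdiff : ∀ x ∈ ball (0 : E) 1, DifferentiableAt ℝ g x := fun x hx =>
    (hg.differentiableOn one_ne_zero).differentiableAt
      (hU.mem_nhds (hball (ball_subset_closedBall hx)))
  obtain ⟨δ, hδ, hsmall⟩ :=
    exists_pos_forall_setIntegral_det_id_add_smul_fderiv μ hK hdiff hmaps hzero
  obtain ⟨s, hs, hcard⟩ := (Ioo_infinite hδ).exists_subset_card_eq (Module.finrank ℝ E + 1)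
  obtain ⟨w, hw⟩ := exists_weights_eval_eq_sum s (1 : ℝ)
  have hdet : ∀ A : E →L[ℝ] E, (ContinuousLinearMap.id ℝ E + A).det =
      ∑ t ∈ s, w t * (ContinuousLinearMap.id ℝ E + t • A).det := fun A => by
    obtain ⟨p, hp, heval⟩ := exists_polynomial_eval_eq_det_id_add_smul (A : E →ₗ[ℝ] E)
    have h := hw p (degree_le_of_natDegree_le hp |>.trans_lt (by rw [hcard]; norm_cast; simp))
    simp only [heval, one_smul] at h
    exact h
  have hsum : ∑ t ∈ s, w t = 1 := by
    simpa using (hw 1 (by rw [degree_one, hcard]; norm_cast; simp)).symm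
  calc ∫ x in ball 0 1, (ContinuousLinearMap.id ℝ E + fderiv ℝ g x).det ∂μ
      = ∑ t ∈ s, w t *
          ∫ x in ball 0 1, (ContinuousLinearMap.id ℝ E + t • fderiv ℝ g x).det ∂μ := by
        simp_rw [← integral_const_mul]
        rw [← integral_finsetSum _ fun t _ =>
          (integrableOn_ball_det_id_add_smul_fderiv μ hU hball hg t).const_mul _]
        exact integral_congr_ae (.of_forall fun x => hdet _)
    _ = ∑ t ∈ s, w t * μ.real (ball 0 1) :=
        Finset.sum_congr rfl fun t ht => by rw [hsmall t (hs ht)]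
    _ = μ.real (ball 0 1) := by rw [← Finset.sum_mul, hsum, one_mul]

end NoRetraction

section Brouwer

open Metric Topology

variable {E : Type*} [NormedAddCommGroup E] [InnerProductSpace ℝ E]

theorem det_fderiv_eq_zero_of_norm_eventuallyEq_one [FiniteDimensional ℝ E] {r : E → E} {x : E}
    (hr : DifferentiableAt ℝ r x) (hnorm : ∀ᶠ y in 𝓝 x, ‖r y‖ = 1) : (fderiv ℝ r x).det = 0 := by
  have horth : ∀ h, inner ℝ (r x) (fderiv ℝ r x h) = 0 := fun h => by
    have hconst : (fun y => ‖r y‖ ^ 2) =ᶠ[𝓝 x] fun _ => (1 : ℝ) :=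
      hnorm.mono fun y hy => by simp [hy]
    have heq := hr.hasFDerivAt.norm_sq.unique ((hasFDerivAt_const 1 x).congr_of_eventuallyEq hconst)
    simpa using DFunLike.congr_fun heq h
  by_contra hdet
  obtain ⟨h, hh⟩ := (LinearMap.equivOfDetNeZero _ hdet).surjective (r x)
  have hself := horth h
  rw [show fderiv ℝ r x h = r x from hh, real_inner_self_eq_norm_sq, hnorm.self_of_nhds] at hself
  norm_num at hself

theorem not_contDiffOn_retraction_sphere [FiniteDimensional ℝ E] {U : Set E} (hU : IsOpen U)
    (hball : closedBall 0 1 ⊆ U) {r : E → E} (hr : ContDiffOn ℝ 1 r U)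
    (hnorm : ∀ x ∈ closedBall (0 : E) 1, ‖r x‖ = 1) :
    ¬ ∀ x ∈ sphere (0 : E) 1, r x = x := by
  intro hfix
  borelize E
  have hvol := setIntegral_det_id_add_fderiv_eq_measureReal_ball volume hU hball
    (hr.sub contDiffOn_id) (fun x hx => by simp [hnorm x hx]) fun x hx => by simp [hfix x hx]
  have hvanish : ∀ x ∈ ball (0 : E) 1,
      (ContinuousLinearMap.id ℝ E + fderiv ℝ (fun y => r y - id y) x).det = 0 := fun x hx => by
    have hdiff : DifferentiableAt ℝ r x := (hr.differentiableOn one_ne_zero).differentiableAt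
      (hU.mem_nhds (hball (ball_subset_closedBall hx)))
    rw [fderiv_fun_sub hdiff differentiableAt_id, fderiv_id, add_sub_cancel]
    exact det_fderiv_eq_zero_of_norm_eventuallyEq_one hdiff
      ((isOpen_ball.eventually_mem hx).mono fun y hy => hnorm y (ball_subset_closedBall hy))
  rw [setIntegral_eq_zero_of_forall_eq_zero hvanish] at hvol
  exact (ENNReal.toReal_pos (measure_ball_pos volume _ one_pos).ne' measure_ball_lt_top.ne).ne hvol

/-- The point where the ray issuing from `x` in the direction `u` leaves the unit ball, obtained
from the larger root of `‖x + l • u‖ ^ 2 = 1`. -/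
noncomputable def sphereExit (x u : E) : E :=
  x + ((√(inner ℝ x u ^ 2 + ‖u‖ ^ 2 * (1 - ‖x‖ ^ 2)) - inner ℝ x u) / ‖u‖ ^ 2) • u

theorem norm_sphereExit {x u : E} (hu : u ≠ 0)
    (hdisc : 0 ≤ inner ℝ x u ^ 2 + ‖u‖ ^ 2 * (1 - ‖x‖ ^ 2)) : ‖sphereExit x u‖ = 1 := by
  have hnorm : ‖u‖ ≠ 0 := norm_ne_zero_iff.2 hu
  have hsq : ‖sphereExit x u‖ ^ 2 = 1 := by
    rw [sphereExit, norm_add_sq_real, real_inner_smul_right, norm_smul, mul_pow, Real.norm_eq_abs,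
      sq_abs]
    field_simp
    linear_combination Real.sq_sqrt hdisc
  exact (pow_eq_one_iff_of_nonneg (norm_nonneg _) two_ne_zero).1 hsq

theorem sphereExit_of_norm_eq_one {x u : E} (hx : ‖x‖ = 1) (hu : 0 ≤ inner ℝ x u) :
    sphereExit x u = x := by
  simp [sphereExit, hx, Real.sqrt_sq hu]

theorem contDiffAt_sphereExit {n : WithTop ℕ∞} {u : E → E} {x : E} (hu : ContDiffAt ℝ n u x)
    (hx : u x ≠ 0) (hdisc : 0 < inner ℝ x (u x) ^ 2 + ‖u x‖ ^ 2 * (1 - ‖x‖ ^ 2)) :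
    ContDiffAt ℝ n (fun y => sphereExit y (u y)) x := by
  have hinner : ContDiffAt ℝ n (fun y => inner ℝ y (u y)) x := contDiffAt_id.inner ℝ hu
  have hdiscr : ContDiffAt ℝ n
      (fun y => inner ℝ y (u y) ^ 2 + ‖u y‖ ^ 2 * (1 - ‖y‖ ^ 2)) x :=
    (hinner.pow 2).add ((hu.norm_sq ℝ).mul (contDiffAt_const.sub (contDiffAt_id.norm_sq ℝ)))
  exact contDiffAt_id.add ((((hdiscr.sqrt hdisc.ne').sub hinner).div (hu.norm_sq ℝ)
    (pow_ne_zero 2 (norm_ne_zero_iff.2 hx))).smul hu)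

theorem inner_sub_pos_of_norm_le {x y : E} (hyx : ‖y‖ ≤ ‖x‖) (hne : x ≠ y) :
    0 < inner ℝ x (x - y) := by
  have hpos : 0 < ‖x - y‖ ^ 2 := by have := norm_pos_iff.2 (sub_ne_zero.2 hne); positivity
  rw [norm_sub_sq_real] at hpos
  rw [inner_sub_right, real_inner_self_eq_norm_sq]
  nlinarith [norm_nonneg y]

theorem sphereExit_discrim_pos {x y : E} (hx : ‖x‖ ≤ 1) (hy : ‖y‖ ≤ 1) (hne : x ≠ y) :
    0 < inner ℝ x (x - y) ^ 2 + ‖x - y‖ ^ 2 * (1 - ‖x‖ ^ 2) := by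
  have hpos : 0 < ‖x - y‖ := norm_pos_iff.2 (sub_ne_zero.2 hne)
  rcases hx.lt_or_eq with hlt | heq
  · have : 0 < 1 - ‖x‖ ^ 2 := by nlinarith [norm_nonneg x]
    positivity
  · have := inner_sub_pos_of_norm_le (heq ▸ hy) hne
    rw [heq]
    positivity

theorem exists_lipschitzWith_one_retraction {C : Set E} (hne : C.Nonempty) (hC : IsComplete C)
    (hconv : Convex ℝ C) :
    ∃ ρ : E → E, LipschitzWith 1 ρ ∧ (∀ x, ρ x ∈ C) ∧ ∀ x ∈ C, ρ x = x := by
  choose ρ hρ hmin using exists_norm_eq_iInf_of_complete_convex hne hC hconv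
  have hobtuse : ∀ x, ∀ w ∈ C, inner ℝ (x - ρ x) (w - ρ x) ≤ 0 := fun x =>
    (norm_eq_iInf_iff_real_inner_le_zero hconv (hρ x)).1 (hmin x)
  refine ⟨ρ, LipschitzWith.of_dist_le_mul fun x y => ?_, hρ, fun x hx => ?_⟩
  · have hsq : ‖ρ x - ρ y‖ ^ 2 ≤ inner ℝ (x - y) (ρ x - ρ y) := by
      have hdecomp : inner ℝ (x - y) (ρ x - ρ y) - inner ℝ (ρ x - ρ y) (ρ x - ρ y) =
          -inner ℝ (x - ρ x) (ρ y - ρ x) - inner ℝ (y - ρ y) (ρ x - ρ y) := by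
        simp only [inner_sub_left, inner_sub_right]
        ring
      rw [← real_inner_self_eq_norm_sq]
      linarith [hobtuse x _ (hρ y), hobtuse y _ (hρ x)]
    rw [NNReal.coe_one, one_mul, dist_eq_norm, dist_eq_norm]
    nlinarith [real_inner_le_norm (x - y) (ρ x - ρ y), norm_nonneg (x - y), norm_nonneg (ρ x - ρ y)]
  · have hself := hobtuse x x hx
    rw [real_inner_self_eq_norm_sq] at hself
    exact (sub_eq_zero.1 (norm_eq_zero.1 (by nlinarith [norm_nonneg (x - ρ x)]))).symm

variable [FiniteDimensional ℝ E]

theorem exists_fixedPoint_closedBall_of_contDiff {f : E → E} (hf : ContDiff ℝ 1 f)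
    (hmaps : MapsTo f (closedBall 0 1) (closedBall 0 1)) : ∃ x ∈ closedBall (0 : E) 1, f x = x := by
  by_contra! hne
  set U : Set E := {x | x - f x ≠ 0} ∩
    {x | 0 < inner ℝ x (x - f x) ^ 2 + ‖x - f x‖ ^ 2 * (1 - ‖x‖ ^ 2)}
  have hfc := hf.continuous
  have hU : IsOpen U :=
    (isOpen_ne_fun (by fun_prop) continuous_const).inter (isOpen_lt continuous_const (by fun_prop))
  have hball : closedBall 0 1 ⊆ U := fun x hx =>
    ⟨sub_ne_zero.2 (hne x hx).symm, sphereExit_discrim_pos (mem_closedBall_zero_iff.1 hx)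
      (mem_closedBall_zero_iff.1 (hmaps hx)) (hne x hx).symm⟩
  have hsmooth : ContDiffOn ℝ 1 (fun x => sphereExit x (x - f x)) U := fun x hx =>
    (contDiffAt_sphereExit (contDiffAt_id.sub hf.contDiffAt) hx.1 hx.2).contDiffWithinAt
  refine not_contDiffOn_retraction_sphere hU hball hsmooth
    (fun x hx => norm_sphereExit (hball hx).1 (hball hx).2.le) fun x hx => ?_
  have hx1 : ‖x‖ = 1 := mem_sphere_zero_iff_norm.1 hx
  have hxball : x ∈ closedBall (0 : E) 1 := sphere_subset_closedBall hx
  exact sphereExit_of_norm_eq_one hx1 (inner_sub_pos_of_norm_le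
    (hx1 ▸ mem_closedBall_zero_iff.1 (hmaps hxball)) (hne x hxball).symm).le

theorem exists_fixedPoint_closedBall {f : E → E} (hf : Continuous f)
    (hmaps : MapsTo f (closedBall 0 1) (closedBall 0 1)) : ∃ x ∈ closedBall (0 : E) 1, f x = x := by
  by_contra! hne
  obtain ⟨x₀, hx₀, hmin⟩ := (isCompact_closedBall (0 : E) 1).exists_isMinOn
    ⟨0, mem_closedBall_self zero_le_one⟩ (continuous_id.dist hf).continuousOn
  set ε := dist x₀ (f x₀) / 2 with hεdef
  have hε : 0 < ε := half_pos (dist_pos.2 (hne x₀ hx₀).symm)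
  obtain ⟨g, hg, hgf, -⟩ := hf.exists_contDiff_approx 1 continuous_const fun _ => hε
  have hgnorm : ∀ x ∈ closedBall (0 : E) 1, ‖g x‖ ≤ 1 + ε := fun x hx => by
    have hfx := mem_closedBall_zero_iff.1 (hmaps hx)
    linarith [norm_le_norm_add_norm_sub' (g x) (f x), dist_eq_norm (g x) (f x), hgf x]
  obtain ⟨x, hx, hfix⟩ := exists_fixedPoint_closedBall_of_contDiff
    (f := fun x => (1 + ε)⁻¹ • g x) (contDiff_const.smul hg) fun x hx => by
      rw [mem_closedBall_zero_iff, norm_smul, norm_inv, Real.norm_of_nonneg (by positivity)]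
      exact inv_mul_le_one_of_le₀ (hgnorm x hx) (by positivity)
  have hgx : g x = (1 + ε) • x := (inv_smul_eq_iff₀ (by positivity)).1 hfix
  have hdist : dist x (g x) ≤ ε := by
    rw [hgx, dist_eq_norm, show x - (1 + ε) • x = -(ε • x) by module, norm_neg, norm_smul,
      Real.norm_of_nonneg hε.le]
    exact mul_le_of_le_one_right hε.le (mem_closedBall_zero_iff.1 hx)
  have hle : dist x₀ (f x₀) ≤ dist x (f x) := hmin hx
  linarith [dist_triangle x (g x) (f x), hgf x]

theorem exists_fixedPoint_of_isCompact_of_convex_of_innerProductSpace {C : Set E}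
    (hne : C.Nonempty) (hC : IsCompact C) (hconv : Convex ℝ C) {f : E → E} (hf : ContinuousOn f C)
    (hmaps : MapsTo f C C) :
    ∃ x ∈ C, f x = x := by
  obtain ⟨ρ, hρ, hρC, hρid⟩ := exists_lipschitzWith_one_retraction hne hC.isComplete hconv
  obtain ⟨R, hR, hCR⟩ := hC.isBounded.subset_closedBall_lt 0 0
  have hcont : Continuous fun x => R⁻¹ • f (ρ (R • x)) :=
    (hf.comp_continuous (hρ.continuous.comp (continuous_const_smul R)) fun x => hρC _).const_smul _
  obtain ⟨x, -, hx⟩ := exists_fixedPoint_closedBall hcont fun x _ => by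
    rw [mem_closedBall_zero_iff, norm_smul, norm_inv, Real.norm_of_nonneg hR.le]
    exact inv_mul_le_one_of_le₀ (mem_closedBall_zero_iff.1 (hCR (hmaps (hρC _)))) hR.le
  have hfix : f (ρ (R • x)) = R • x := (inv_smul_eq_iff₀ hR.ne').1 hx
  have hmem : R • x ∈ C := hfix ▸ hmaps (hρC _)
  exact ⟨R • x, hmem, by rwa [hρid _ hmem] at hfix⟩

theorem exists_fixedPoint_of_isCompact_of_convex {V : Type*} [AddCommGroup V] [TopologicalSpace V]
    [IsTopologicalAddGroup V] [T2Space V] [Module ℝ V] [ContinuousSMul ℝ V] [FiniteDimensional ℝ V]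
    {C : Set V} (hne : C.Nonempty) (hC : IsCompact C) (hconv : Convex ℝ C) {f : V → V}
    (hf : ContinuousOn f C) (hmaps : MapsTo f C C) : ∃ x ∈ C, f x = x := by
  let φ : V ≃L[ℝ] EuclideanSpace ℝ (Fin (Module.finrank ℝ V)) := toEuclidean
  have hsymm : MapsTo φ.symm (φ '' C) C := by simp [MapsTo]
  obtain ⟨y, hy, hfix⟩ := exists_fixedPoint_of_isCompact_of_convex_of_innerProductSpace
    (f := fun y => φ (f (φ.symm y))) (hne.image φ) (hC.image φ.continuous)
    (hconv.is_linear_image ⟨map_add φ, map_smul φ⟩)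
    (φ.continuous.comp_continuousOn (hf.comp φ.symm.continuous.continuousOn hsymm))
    fun y hy => mem_image_of_mem φ (hmaps (hsymm hy))
  exact ⟨φ.symm y, hsymm hy, φ.injective (hfix.trans (φ.apply_symm_apply y).symm)⟩

end Brouwer

section Schauder

open Metric Filter Topology

variable {F : Type*} [NormedAddCommGroup F] [NormedSpace ℝ F]

theorem dist_sum_smul_le {ι : Type*} [Fintype ι] {w : ι → ℝ} (hw : w ∈ stdSimplex ℝ ι) {y : ι → F}
    {z : F} {ε : ℝ} (hε : ∀ i, w i ≠ 0 → dist z (y i) ≤ ε) : dist z (∑ i, w i • y i) ≤ ε := by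
  have hdiff : z - ∑ i, w i • y i = ∑ i, w i • (z - y i) := by
    simp only [smul_sub, Finset.sum_sub_distrib, ← Finset.sum_smul, hw.2, one_smul]
  rw [dist_eq_norm, hdiff]
  calc ‖∑ i, w i • (z - y i)‖ ≤ ∑ i, w i * ε := norm_sum_le_of_le _ fun i _ => by
        rw [norm_smul, Real.norm_of_nonneg (hw.1 i), ← dist_eq_norm]
        by_cases hi : w i = 0
        · simp [hi]
        · exact mul_le_mul_of_nonneg_left (hε i hi) (hw.1 i)
    _ = ε := by rw [← Finset.sum_mul, hw.2, one_mul]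

theorem exists_continuousOn_barycentric_approx {B : Set F} (hB : TotallyBounded B) {ε : ℝ}
    (hε : 0 < ε) :
    ∃ t : Finset F, ↑t ⊆ B ∧ ∃ w : F → t → ℝ, ContinuousOn w B ∧ ∀ z ∈ B,
      w z ∈ stdSimplex ℝ t ∧ dist z (∑ i, w z i • (i : F)) ≤ ε := by
  obtain ⟨t, htB, htfin, hcover⟩ := finite_approx_of_totallyBounded hB ε hε
  lift t to Finset F using htfin
  set φ : t → F → ℝ := fun i z => max 0 (ε - dist z i)
  have hφcont : ∀ i, Continuous (φ i) := fun i => by fun_prop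
  have hφnonneg : ∀ i z, 0 ≤ φ i z := fun i z => le_max_left _ _
  have hpos : ∀ z ∈ B, 0 < ∑ i, φ i z := fun z hz => by
    obtain ⟨y, hy, hzy⟩ := mem_iUnion₂.1 (hcover hz)
    exact Finset.sum_pos' (fun i _ => hφnonneg i z)
      ⟨⟨y, hy⟩, Finset.mem_univ _, lt_max_of_lt_right (sub_pos.2 hzy)⟩
  refine ⟨t, htB, fun z i => φ i z / ∑ j, φ j z, continuousOn_pi.2 fun i =>
    (hφcont i).continuousOn.div (continuous_finsetSum _ fun j _ => hφcont j).continuousOn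
      fun z hz => (hpos z hz).ne', fun z hz => ?_⟩
  have hmem : (fun i => φ i z / ∑ j, φ j z) ∈ stdSimplex ℝ t :=
    ⟨fun i => div_nonneg (hφnonneg i z) (hpos z hz).le, by
      rw [← Finset.sum_div, div_self (hpos z hz).ne']⟩
  refine ⟨hmem, dist_sum_smul_le hmem fun i hi => ?_⟩
  contrapose! hi
  simp [φ, hi.le]

theorem exists_dist_le_of_totallyBounded_image {C : Set F} (hconv : Convex ℝ C) (hne : C.Nonempty)
    {G : F → F} (hG : ContinuousOn G C) (hmaps : MapsTo G C C) (htb : TotallyBounded (G '' C))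
    {ε : ℝ} (hε : 0 < ε) : ∃ x ∈ C, dist (G x) x ≤ ε := by
  obtain ⟨t, ht, w, hw, happrox⟩ := exists_continuousOn_barycentric_approx htb hε
  set combo : (t → ℝ) → F := fun a => ∑ i, a i • (i : F)
  have hcombo : MapsTo combo (stdSimplex ℝ t) C := fun a ha =>
    hconv.sum_mem (fun i _ => ha.1 i) ha.2 fun i _ => hmaps.image_subset (ht i.2)
  have himage : ∀ a ∈ stdSimplex ℝ t, G (combo a) ∈ G '' C := fun a ha =>
    mem_image_of_mem G (hcombo ha)
  obtain ⟨x₀, hx₀⟩ := hne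
  obtain ⟨a, ha, hfix⟩ := exists_fixedPoint_of_isCompact_of_convex
    ⟨_, (happrox _ (mem_image_of_mem G hx₀)).1⟩ (isCompact_stdSimplex ℝ t) (convex_stdSimplex ℝ t)
    (hw.comp (hG.comp (by fun_prop : Continuous combo).continuousOn hcombo) himage)
    fun a ha => (happrox _ (himage a ha)).1
  have hdist := (happrox _ (himage a ha)).2
  simp only [Function.comp_apply] at hfix
  rw [hfix] at hdist
  exact ⟨combo a, hcombo ha, hdist⟩

theorem exists_fixedPoint_of_mapsTo_isCompact {C Q : Set F} (hconv : Convex ℝ C)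
    (hclosed : IsClosed C) (hne : C.Nonempty) (hQ : IsCompact Q) {G : F → F}
    (hG : ContinuousOn G C) (hmaps : MapsTo G C C) (hGQ : MapsTo G C Q) : ∃ x ∈ C, G x = x := by
  have happrox : ∀ n : ℕ, ∃ x ∈ C, dist (G x) x ≤ 1 / ((n : ℝ) + 1) := fun n =>
    exists_dist_le_of_totallyBounded_image hconv hne hG hmaps
      (hQ.totallyBounded.subset hGQ.image_subset) Nat.one_div_pos_of_nat
  choose x hxC hdist using happrox
  obtain ⟨z, -, φ, hφ, hGlim⟩ := hQ.tendsto_subseq fun n => hGQ (hxC n)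
  have hxlim : Tendsto (x ∘ φ) atTop (𝓝 z) :=
    (tendsto_iff_of_dist (squeeze_zero (fun _ => dist_nonneg) (fun n => hdist (φ n))
      (tendsto_one_div_add_atTop_nhds_zero_nat.comp hφ.tendsto_atTop))).1 hGlim
  have hzC : z ∈ C := hclosed.mem_of_tendsto hxlim (.of_forall fun n => hxC _)
  have hGz : Tendsto (G ∘ x ∘ φ) atTop (𝓝 (G z)) :=
    (hG z hzC).tendsto.comp (tendsto_nhdsWithin_iff.2 ⟨hxlim, .of_forall fun n => hxC _⟩)
  exact ⟨z, hzC, tendsto_nhds_unique hGz hGlim⟩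

end Schauder

section ConeFixedPoint

open Metric Filter Topology

variable {E : Type*} [NormedAddCommGroup E] [NormedSpace ℝ E] {K : PointedCone ℝ E}

/-- The base of the cone `K` cut out by the affine hyperplane `ℓ = 1`. -/
def coneBase (K : PointedCone ℝ E) (ℓ : E →L[ℝ] ℝ) : Set E := {y | y ∈ K ∧ ℓ y = 1}

/-- A gauge on the cone `K`: a continuous, positively homogeneous functional comparable to the norm
on `K`. Its level set `{x ∈ K | a x = 1}` is a boundary on which fixed-point index conditions are
imposed. -/
structure IsConeGauge (K : PointedCone ℝ E) (a : E → ℝ) : Prop where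
  continuous : Continuous a
  smul : ∀ t : ℝ, 0 ≤ t → ∀ x, a (t • x) = t * a x
  exists_mul_norm_le : ∃ m > 0, ∀ x ∈ K, m * ‖x‖ ≤ a x

/-- Radial projection onto `coneBase K ℓ` from outside, translation along `e` from inside. -/
noncomputable def toConeBase (ℓ : E →L[ℝ] ℝ) (e : E) (s : E) : E :=
  (max (ℓ s) 1)⁻¹ • (s + max (1 - ℓ s) 0 • e)

variable {ℓ : E →L[ℝ] ℝ} {e : E}

theorem isClosed_coneBase (hK : IsClosed (K : Set E)) : IsClosed (coneBase K ℓ) :=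
  hK.inter (isClosed_eq ℓ.continuous continuous_const)

theorem convex_coneBase : Convex ℝ (coneBase K ℓ) :=
  K.convex.inter ((convex_singleton (1 : ℝ)).linear_preimage (ℓ : E →ₗ[ℝ] ℝ))

theorem continuous_toConeBase : Continuous (toConeBase ℓ e) :=
  Continuous.smul (Continuous.inv₀ (by fun_prop) fun s => (lt_max_of_lt_right one_pos).ne')
    (by fun_prop)

theorem toConeBase_mem_coneBase (he : e ∈ coneBase K ℓ) {s : E} (hs : s ∈ K) :
    toConeBase ℓ e s ∈ coneBase K ℓ := by
  have hpos : 0 < max (ℓ s) 1 := lt_max_of_lt_right one_pos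
  have hsum : ℓ s + max (1 - ℓ s) 0 = max (ℓ s) 1 := by
    rw [← max_add_add_left, add_sub_cancel, add_zero, max_comm]
  refine ⟨K.smul_mem (inv_nonneg.2 hpos.le)
    (K.add_mem hs (K.smul_mem (le_max_right _ _) he.1)), ?_⟩
  rw [toConeBase, map_smul, map_add, map_smul, he.2, smul_eq_mul, smul_eq_mul, mul_one, hsum,
    inv_mul_cancel₀ hpos.ne']

-- At a fixed point of the map `G` below, the parameter `τ` can stop moving only where `ℓ ∘ S = 1`
-- or at an end of `[0, 1]`.
theorem exists_coneBase_alternative (hK : IsClosed (K : Set E)) (he : e ∈ coneBase K ℓ)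
    {S : E × ℝ → E} {Q : Set E} (hQ : IsCompact Q)
    (hS : ContinuousOn S (coneBase K ℓ ×ˢ Icc 0 1))
    (hSK : MapsTo S (coneBase K ℓ ×ˢ Icc 0 1) K) (hSQ : MapsTo S (coneBase K ℓ ×ˢ Icc 0 1) Q) :
    ∃ y ∈ coneBase K ℓ, (∃ τ ∈ Icc (0 : ℝ) 1, S (y, τ) = y) ∨
      (1 < ℓ (S (y, 0)) ∧ S (y, 0) = ℓ (S (y, 0)) • y) ∨
      (ℓ (S (y, 1)) < 1 ∧ S (y, 1) + (1 - ℓ (S (y, 1))) • e = y) := by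
  set G : E × ℝ → E × ℝ := fun p =>
    (toConeBase ℓ e (S p), projIcc (0 : ℝ) 1 zero_le_one (p.2 + 1 - ℓ (S p)))
  have hℓS := ℓ.continuous.comp_continuousOn hS
  have hG : ContinuousOn G (coneBase K ℓ ×ˢ Icc 0 1) :=
    (continuous_toConeBase.comp_continuousOn hS).prodMk
      ((continuous_subtype_val.comp continuous_projIcc).comp_continuousOn
        ((continuous_snd.continuousOn.add continuousOn_const).sub hℓS))
  obtain ⟨⟨y, τ⟩, ⟨hy, hτ⟩, hfix⟩ := exists_fixedPoint_of_mapsTo_isCompact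
    (convex_coneBase.prod (convex_Icc 0 1)) ((isClosed_coneBase hK).prod isClosed_Icc)
    ⟨(e, 0), mk_mem_prod he (left_mem_Icc.2 zero_le_one)⟩
    ((hQ.image continuous_toConeBase).prod isCompact_Icc)
    hG (fun p hp => mk_mem_prod (toConeBase_mem_coneBase he (hSK hp)) (projIcc 0 1 _ _).2)
    fun p hp => mk_mem_prod (mem_image_of_mem _ (hSQ hp)) (projIcc 0 1 _ _).2
  obtain ⟨hyfix, hτfix⟩ := Prod.mk.inj hfix
  simp only [toConeBase] at hyfix
  simp only [coe_projIcc] at hτfix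
  refine ⟨y, hy, ?_⟩
  rcases lt_trichotomy (ℓ (S (y, τ))) 1 with hlt | heq | hgt
  · obtain rfl : τ = 1 := by grind
    rw [max_eq_right hlt.le, max_eq_left (sub_nonneg.2 hlt.le), inv_one, one_smul] at hyfix
    exact Or.inr (Or.inr ⟨hlt, hyfix⟩)
  · simp only [heq, max_self, inv_one, sub_self, zero_smul, add_zero, one_smul] at hyfix
    exact Or.inl ⟨τ, hτ, hyfix⟩
  · obtain rfl : τ = 0 := by grind
    rw [max_eq_left hgt.le, max_eq_right (sub_nonpos.2 hgt.le), zero_smul, add_zero] at hyfix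
    exact Or.inr (Or.inl ⟨hgt, ((inv_smul_eq_iff₀ (zero_lt_one.trans hgt).ne').1 hyfix)⟩)

theorem norm_pos_of_mem_coneBase {y : E} (hy : y ∈ coneBase K ℓ) : 0 < ‖y‖ :=
  norm_pos_iff.2 fun h => by simpa [h] using hy.2

namespace IsConeGauge

open scoped Pointwise

variable {a b : E → ℝ}

theorem exists_le_mul_norm (ha : IsConeGauge K a) : ∃ M > 0, ∀ x, a x ≤ M * ‖x‖ := by
  have h0 : a 0 = 0 := by simpa using ha.smul 0 le_rfl 0
  obtain ⟨δ, hδ, hball⟩ := Metric.continuous_iff.1 ha.continuous 0 1 one_pos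
  refine ⟨2 / δ, by positivity, fun x => ?_⟩
  rcases eq_or_ne x 0 with rfl | hx
  · simp [h0]
  have hx' : 0 < ‖x‖ := norm_pos_iff.2 hx
  have hlt := hball ((δ / (2 * ‖x‖)) • x) (by
    rw [dist_zero_right, norm_smul, Real.norm_of_nonneg (by positivity)]
    field_simp
    linarith)
  rw [h0, dist_zero_right, ha.smul _ (by positivity), Real.norm_eq_abs] at hlt
  have := (le_abs_self _).trans hlt.le
  field_simp at this ⊢
  linarith

/-- The affine path `τ ↦ (1 - τ) a + τ b` between two gauges, as a function of `(x, τ)`. -/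
def interpolation (a b : E → ℝ) (p : E × ℝ) : ℝ := (1 - p.2) * a p.1 + p.2 * b p.1

theorem continuous_interpolation (ha : IsConeGauge K a) (hb : IsConeGauge K b) :
    Continuous (interpolation a b) :=
  ((continuous_const.sub continuous_snd).mul (ha.continuous.comp continuous_fst)).add
    (continuous_snd.mul (hb.continuous.comp continuous_fst))

theorem exists_interpolation_mem_Icc (ha : IsConeGauge K a) (hb : IsConeGauge K b) :
    ∃ m > 0, ∃ M > 0, ∀ p ∈ (K : Set E) ×ˢ Icc (0 : ℝ) 1,
      interpolation a b p ∈ Icc (m * ‖p.1‖) (M * ‖p.1‖) := by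
  obtain ⟨m, hm, ham⟩ := ha.exists_mul_norm_le
  obtain ⟨m', hm', hbm⟩ := hb.exists_mul_norm_le
  obtain ⟨M, hM, haM⟩ := ha.exists_le_mul_norm
  obtain ⟨M', -, hbM⟩ := hb.exists_le_mul_norm
  refine ⟨min m m', lt_min hm hm', max M M', lt_max_of_lt_left hM, fun ⟨x, τ⟩ ⟨hx, hτ⟩ => ?_⟩
  have hax : a x ∈ Icc (min m m' * ‖x‖) (max M M' * ‖x‖) :=
    ⟨(mul_le_mul_of_nonneg_right (min_le_left _ _) (norm_nonneg x)).trans (ham x hx),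
      (haM x).trans (mul_le_mul_of_nonneg_right (le_max_left _ _) (norm_nonneg x))⟩
  have hbx : b x ∈ Icc (min m m' * ‖x‖) (max M M' * ‖x‖) :=
    ⟨(mul_le_mul_of_nonneg_right (min_le_right _ _) (norm_nonneg x)).trans (hbm x hx),
      (hbM x).trans (mul_le_mul_of_nonneg_right (le_max_right _ _) (norm_nonneg x))⟩
  exact convex_Icc _ _ hax hbx (sub_nonneg.2 hτ.2) hτ.1 (sub_add_cancel 1 τ)

/-- The map `T` conjugated by the radial projection onto the level set `interpolation a b = 1`. -/
noncomputable def rescale (a b : E → ℝ) (T : E → E) (p : E × ℝ) : E :=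
  interpolation a b p • T ((interpolation a b p)⁻¹ • p.1)

theorem interpolation_pos (ha : IsConeGauge K a) (hb : IsConeGauge K b) {p : E × ℝ}
    (hp : p ∈ coneBase K ℓ ×ˢ Icc 0 1) : 0 < interpolation a b p := by
  obtain ⟨m, hm, M, -, hbounds⟩ := ha.exists_interpolation_mem_Icc hb
  exact (mul_pos hm (norm_pos_of_mem_coneBase hp.1)).trans_le (hbounds p ⟨hp.1.1, hp.2⟩).1

theorem mapsTo_rescale (ha : IsConeGauge K a) (hb : IsConeGauge K b) {T : E → E}
    (hT : MapsTo T K K) : MapsTo (rescale a b T) (coneBase K ℓ ×ˢ Icc 0 1) K := fun _ hp =>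
  have hpos := ha.interpolation_pos hb hp
  K.smul_mem hpos.le (hT (K.smul_mem (inv_nonneg.2 hpos.le) hp.1.1))

theorem continuousOn_rescale (ha : IsConeGauge K a) (hb : IsConeGauge K b) {T : E → E}
    (hT : Continuous T) : ContinuousOn (rescale a b T) (coneBase K ℓ ×ˢ Icc 0 1) :=
  have hcont := (ha.continuous_interpolation hb).continuousOn
  hcont.smul (hT.comp_continuousOn
    ((hcont.inv₀ fun _ hp => (ha.interpolation_pos hb hp).ne').smul continuousOn_fst))

theorem exists_isCompact_mapsTo_rescale (ha : IsConeGauge K a) (hb : IsConeGauge K b) {κ : ℝ}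
    (hκ : 0 < κ) (hℓ : ∀ x ∈ K, κ * ‖x‖ ≤ ℓ x) {T : E → E}
    (hT : ∀ R, ∃ Q, IsCompact Q ∧ MapsTo T (closedBall 0 R) Q) :
    ∃ Q, IsCompact Q ∧ MapsTo (rescale a b T) (coneBase K ℓ ×ˢ Icc 0 1) Q := by
  obtain ⟨m, hm, M, hM, hbounds⟩ := ha.exists_interpolation_mem_Icc hb
  obtain ⟨Q, hQ, hTQ⟩ := hT m⁻¹
  refine ⟨Icc (0 : ℝ) (M * κ⁻¹) • Q, isCompact_Icc.smul_set hQ, fun p hp => ?_⟩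
  have hpos := ha.interpolation_pos hb hp
  have hmem := hbounds p ⟨hp.1.1, hp.2⟩
  have hnorm : ‖p.1‖ ≤ κ⁻¹ := by
    rw [← one_div, le_div_iff₀' hκ, ← hp.1.2]
    exact hℓ p.1 hp.1.1
  refine Set.smul_mem_smul ⟨hpos.le, hmem.2.trans (mul_le_mul_of_nonneg_left hnorm hM.le)⟩ (hTQ ?_)
  rw [mem_closedBall_zero_iff, norm_smul, norm_inv, Real.norm_of_nonneg hpos.le,
    inv_mul_le_iff₀ hpos, ← div_eq_mul_inv, le_div_iff₀' hm]
  exact hmem.1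

theorem pos_of_mem_coneBase (ha : IsConeGauge K a) {y : E} (hy : y ∈ coneBase K ℓ) : 0 < a y := by
  obtain ⟨m, hm, hle⟩ := ha.exists_mul_norm_le
  exact (mul_pos hm (norm_pos_of_mem_coneBase hy)).trans_le (hle y hy.1)

theorem apply_inv_smul_self (ha : IsConeGauge K a) {y : E} (hy : y ∈ coneBase K ℓ) :
    a ((a y)⁻¹ • y) = 1 := by
  have hpos := ha.pos_of_mem_coneBase hy
  rw [ha.smul _ (inv_nonneg.2 hpos.le), inv_mul_cancel₀ hpos.ne']

end IsConeGauge

theorem exists_fixedPoint_of_coneExpansion (hK : IsClosed (K : Set E)) (he : e ∈ coneBase K ℓ)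
    {κ : ℝ} (hκ : 0 < κ) (hℓ : ∀ x ∈ K, κ * ‖x‖ ≤ ℓ x) {a b : E → ℝ} (ha : IsConeGauge K a)
    (hb : IsConeGauge K b) {T : E → E} (hT : Continuous T) (hTK : MapsTo T K K)
    (hTcompact : ∀ R, ∃ Q, IsCompact Q ∧ MapsTo T (closedBall 0 R) Q)
    (hin : ∀ x ∈ K, a x = 1 → ∀ μ : ℝ, 1 < μ → T x ≠ μ • x)
    (hout : ∀ x ∈ K, b x = 1 → ∀ μ : ℝ, 0 < μ → T x + μ • e ≠ x) :
    ∃ x ∈ K, x ≠ 0 ∧ T x = x := by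
  obtain ⟨Q, hQ, hSQ⟩ := ha.exists_isCompact_mapsTo_rescale hb hκ hℓ hTcompact
  obtain ⟨y, hy, ⟨τ, hτ, hfix⟩ | ⟨hgt, hfix⟩ | ⟨hlt, hfix⟩⟩ := exists_coneBase_alternative hK he hQ
    (ha.continuousOn_rescale hb hT) (ha.mapsTo_rescale hb hTK) hSQ
  · have hpos := ha.interpolation_pos hb (p := (y, τ)) ⟨hy, hτ⟩
    refine ⟨(IsConeGauge.interpolation a b (y, τ))⁻¹ • y, K.smul_mem (inv_nonneg.2 hpos.le) hy.1,
      smul_ne_zero (inv_ne_zero hpos.ne') (norm_pos_iff.1 (norm_pos_of_mem_coneBase hy)), ?_⟩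
    rw [eq_inv_smul_iff₀ hpos.ne']
    exact hfix
  · have hpos := ha.pos_of_mem_coneBase hy
    refine absurd ?_ (hin _ (K.smul_mem (inv_nonneg.2 hpos.le) hy.1) (ha.apply_inv_smul_self hy) _
      hgt)
    rw [smul_comm, ← hfix, eq_inv_smul_iff₀ hpos.ne']
    simp only [IsConeGauge.rescale, IsConeGauge.interpolation, sub_zero, one_mul, zero_mul,
      add_zero]
  · have hpos := hb.pos_of_mem_coneBase hy
    refine absurd ?_ (hout _ (K.smul_mem (inv_nonneg.2 hpos.le) hy.1) (hb.apply_inv_smul_self hy) _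
      (mul_pos (inv_pos.2 hpos) (sub_pos.2 hlt)))
    rw [eq_inv_smul_iff₀ hpos.ne', smul_add, smul_smul, mul_inv_cancel_left₀ hpos.ne']
    simpa only [IsConeGauge.rescale, IsConeGauge.interpolation, sub_self, zero_mul, one_mul,
      zero_add] using hfix

end ConeFixedPoint

section KernelOperator

open Metric Topology

variable {X : Type*} [TopologicalSpace X] [CompactSpace X]

theorem isCompact_setOf_abs_le_dist_le {ω : X → X → ℝ} (hω : ∀ t, Filter.Tendsto (ω t) (𝓝 t) (𝓝 0))
    (B : ℝ) : IsCompact {v : C(X, ℝ) | ∀ t, |v t| ≤ B ∧ ∀ t', dist (v t) (v t') ≤ ω t t'} := by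
  set e := (ContinuousMap.isometryEquivBoundedOfCompact X ℝ).toHomeomorph
  rw [← e.isCompact_image, e.image_eq_preimage_symm]
  refine BoundedContinuousFunction.arzela_ascoli₂ (Icc (-B) B) isCompact_Icc _ ?_
    (fun v t hv => abs_le.1 (hv t).1) fun t => ?_
  · refine IsClosed.preimage e.symm.continuous ?_
    simp only [ofPred_forall, ofPred_and]
    exact isClosed_iInter fun t => (isClosed_le (by fun_prop) continuous_const).inter
      (isClosed_iInter fun t' => isClosed_le (by fun_prop) continuous_const)
  · exact equicontinuousAt_of_continuity_modulus (ω t) (hω t) _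
      (Filter.Eventually.of_forall fun t' v => (v.2 t).2 t')

variable [MeasurableSpace X] [BorelSpace X]

theorem integrable_continuousMap (μ : Measure X) [IsFiniteMeasure μ] (w : C(X, ℝ)) :
    Integrable w μ :=
  w.continuous.integrable_of_hasCompactSupport (HasCompactSupport.of_compactSpace w)

variable (μ : Measure X) [IsFiniteMeasure μ]

theorem integrable_mul_continuousMap (φ w : C(X, ℝ)) : Integrable (fun s => φ s * w s) μ :=
  integrable_continuousMap μ (φ * w)

theorem abs_integral_mul_le_integral_abs_mul (φ w : C(X, ℝ)) :
    |∫ s, φ s * w s ∂μ| ≤ (∫ s, |φ s| ∂μ) * ‖w‖ := by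
  rw [← integral_mul_const]
  refine abs_integral_le_integral_abs.trans (integral_mono (integrable_mul_continuousMap μ φ w).abs
    ((integrable_continuousMap μ φ).abs.mul_const _) fun s => ?_)
  rw [abs_mul]
  exact mul_le_mul_of_nonneg_left (w.norm_coe_le_norm s) (abs_nonneg _)

theorem integral_abs_le_measureReal_mul_norm (φ : C(X, ℝ)) :
    ∫ s, |φ s| ∂μ ≤ μ.real univ * ‖φ‖ := by
  rw [← smul_eq_mul, ← integral_const]
  exact integral_mono (integrable_continuousMap μ φ).abs (integrable_const _) φ.norm_coe_le_norm

theorem dist_integral_mul_le (φ ψ w : C(X, ℝ)) :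
    dist (∫ s, φ s * w s ∂μ) (∫ s, ψ s * w s ∂μ) ≤ μ.real univ * dist φ ψ * ‖w‖ := by
  rw [Real.dist_eq, ← integral_sub (integrable_mul_continuousMap μ φ w)
    (integrable_mul_continuousMap μ ψ w), dist_eq_norm]
  simp only [← sub_mul]
  exact (abs_integral_mul_le_integral_abs_mul μ (φ - ψ) w).trans
    (mul_le_mul_of_nonneg_right (integral_abs_le_measureReal_mul_norm μ _) (norm_nonneg w))

theorem continuous_integral_kernel_mul (k : C(X × X, ℝ)) (w : C(X, ℝ)) :
    Continuous fun t => ∫ s, k (t, s) * w s ∂μ :=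
  continuous_iff_continuousAt.2 fun t => tendsto_iff_dist_tendsto_zero.2 <|
    squeeze_zero (fun _ => dist_nonneg)
      (fun t' => dist_integral_mul_le μ (k.curry t') (k.curry t) w) <| by
        have h : Continuous fun t' => μ.real univ * dist (k.curry t') (k.curry t) * ‖w‖ := by
          fun_prop
        simpa using h.tendsto t

/-- The integral operator `w ↦ ∫ k(·, s) w(s) dμ(s)` on continuous functions. -/
noncomputable def kernelOperator (k : C(X × X, ℝ)) : C(X, ℝ) →L[ℝ] C(X, ℝ) :=
  LinearMap.mkContinuous
    { toFun := fun w => ⟨fun t => ∫ s, k (t, s) * w s ∂μ, continuous_integral_kernel_mul μ k w⟩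
      map_add' := fun w w' => ContinuousMap.ext fun t => by
        refine Eq.trans ?_ (integral_add (integrable_mul_continuousMap μ (k.curry t) w)
          (integrable_mul_continuousMap μ (k.curry t) w'))
        exact integral_congr_ae (Filter.Eventually.of_forall fun s => mul_add _ _ _)
      map_smul' := fun l w => ContinuousMap.ext fun t => by
        refine Eq.trans ?_ (integral_const_mul l fun s => k (t, s) * w s)
        exact integral_congr_ae (Filter.Eventually.of_forall fun s => mul_left_comm _ _ _) }
    (μ.real univ * ‖k‖) fun w => by
      refine (ContinuousMap.norm_le _ (by positivity)).2 fun t => ?_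
      refine (abs_integral_mul_le_integral_abs_mul μ (k.curry t) w).trans ?_
      refine mul_le_mul_of_nonneg_right ((integral_abs_le_measureReal_mul_norm μ _).trans ?_)
        (norm_nonneg w)
      exact mul_le_mul_of_nonneg_left ((ContinuousMap.norm_le _ (norm_nonneg k)).2 fun s =>
        k.norm_coe_le_norm (t, s)) measureReal_nonneg

variable {μ}

theorem kernelOperator_apply (k : C(X × X, ℝ)) (w : C(X, ℝ)) (t : X) :
    kernelOperator μ k w t = ∫ s, k (t, s) * w s ∂μ := rfl

theorem isCompactOperator_kernelOperator (k : C(X × X, ℝ)) :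
    IsCompactOperator (kernelOperator μ k) := by
  refine (isCompactOperator_iff_image_closedBall_subset_compact
    (kernelOperator μ k : C(X, ℝ) →ₗ[ℝ] C(X, ℝ)) one_pos).2 ⟨_, isCompact_setOf_abs_le_dist_le
      (ω := fun t t' => μ.real univ * dist (k.curry t) (k.curry t')) (fun t => ?_)
      ‖kernelOperator μ k‖, ?_⟩
  · have h : Continuous fun t' => μ.real univ * dist (k.curry t) (k.curry t') := by fun_prop
    simpa using h.tendsto t
  rintro _ ⟨w, hw, rfl⟩ t
  have hw : ‖w‖ ≤ 1 := mem_closedBall_zero_iff.1 hw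
  refine ⟨((kernelOperator μ k w).norm_coe_le_norm t).trans
    ((kernelOperator μ k).unit_le_opNorm w hw), fun t' => ?_⟩
  exact (dist_integral_mul_le μ (k.curry t) (k.curry t') w).trans
    (mul_le_of_le_one_right (by positivity) hw)

theorem mul_norm_kernelOperator_le_apply {k : C(X × X, ℝ)} {w Φ : C(X, ℝ)} (hw : ∀ s, 0 ≤ w s)
    (hΦ : ∀ t s, |k (t, s)| ≤ Φ s) {c : ℝ} (hc : 0 ≤ c) {t : X}
    (hk : ∀ s, c * Φ s ≤ k (t, s)) : c * ‖kernelOperator μ k w‖ ≤ kernelOperator μ k w t := by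
  have hΦw : ∀ s, 0 ≤ Φ s * w s := fun s =>
    mul_nonneg ((abs_nonneg _).trans (hΦ t s)) (hw s)
  have hnorm : ‖kernelOperator μ k w‖ ≤ ∫ s, Φ s * w s ∂μ :=
    (ContinuousMap.norm_le _ (integral_nonneg hΦw)).2 fun t' => by
      refine abs_integral_le_integral_abs.trans (integral_mono
        (integrable_mul_continuousMap μ (k.curry t') w).abs (integrable_mul_continuousMap μ Φ w)
        fun s => ?_)
      simp only [abs_mul, abs_of_nonneg (hw s)]
      exact mul_le_mul_of_nonneg_right (hΦ t' s) (hw s)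
  calc c * ‖kernelOperator μ k w‖ ≤ c * ∫ s, Φ s * w s ∂μ := mul_le_mul_of_nonneg_left hnorm hc
    _ = ∫ s, c * (Φ s * w s) ∂μ := (integral_const_mul _ _).symm
    _ ≤ ∫ s, k (t, s) * w s ∂μ := integral_mono
        ((integrable_mul_continuousMap μ Φ w).const_mul c)
        (integrable_mul_continuousMap μ (k.curry t) w) fun s => by
          simpa only [mul_assoc] using mul_le_mul_of_nonneg_right (hk s) (hw s)

theorem abs_kernelOperator_apply_le {k : C(X × X, ℝ)} {w : C(X, ℝ)} {A : ℝ} (hA : ‖w‖ ≤ A) (t : X) :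
    |kernelOperator μ k w t| ≤ (∫ s, |k (t, s)| ∂μ) * A :=
  (abs_integral_mul_le_integral_abs_mul μ (k.curry t) w).trans
    (mul_le_mul_of_nonneg_left hA (integral_nonneg fun _ => abs_nonneg _))

theorem setIntegral_mul_le_kernelOperator_apply {k : C(X × X, ℝ)} {w : C(X, ℝ)}
    (hw : ∀ s, 0 ≤ w s) {t : X} (hk : ∀ s, 0 ≤ k (t, s)) {S : Set X} (hS : MeasurableSet S)
    {A : ℝ} (hA : ∀ s ∈ S, A ≤ w s) :
    (∫ s in S, k (t, s) ∂μ) * A ≤ kernelOperator μ k w t := by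
  have hint := integrable_mul_continuousMap μ (k.curry t) w
  rw [← integral_mul_const]
  exact (setIntegral_mono_on ((integrable_continuousMap μ (k.curry t)).integrableOn.mul_const A)
    hint.integrableOn hS fun s hs => mul_le_mul_of_nonneg_left (hA s hs) (hk s)).trans
    (setIntegral_le_integral hint (Filter.Eventually.of_forall fun s => mul_nonneg (hk s) (hw s)))

end KernelOperator

section Hammerstein

open Metric
open scoped NNReal

variable {X ι : Type*} [TopologicalSpace X]

section Functionals

variable [Fintype ι]

/-- The functional `x ↦ ∑ᵢ xᵢ(zᵢ)`, positive on a Harnack cone when `zᵢ ∈ Sᵢ`. -/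
noncomputable def sumEval (z : ι → X) : (ι → C(X, ℝ)) →L[ℝ] ℝ :=
  ∑ i, (ContinuousMap.evalCLM ℝ (z i)).comp (ContinuousLinearMap.proj i)

theorem sumEval_apply (z : ι → X) (x : ι → C(X, ℝ)) : sumEval z x = ∑ i, x i (z i) := by
  simp [sumEval]

variable [Nonempty ι]

/-- The gauge `x ↦ maxᵢ (min over Sᵢ of xᵢ) / rᵢ`. -/
noncomputable def maxMinGauge (S : ι → Set X) (r : ι → ℝ) (x : ι → C(X, ℝ)) : ℝ :=
  Finset.univ.sup' Finset.univ_nonempty fun i => (r i)⁻¹ * sInf (x i '' S i)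

theorem exists_le_apply_of_maxMinGauge_eq_one {S : ι → Set X} {r : ι → ℝ}
    (hS : ∀ i, IsCompact (S i))
    (hne : ∀ i, (S i).Nonempty) (hr : ∀ i, 0 < r i) {x : ι → C(X, ℝ)} (hx : maxMinGauge S r x = 1) :
    (∀ j, ∃ t ∈ S j, x j t ≤ r j) ∧ ∃ i, ∀ t ∈ S i, r i ≤ x i t := by
  have hmin j := (hS j).exists_sInf_image_eq_and_le (hne j) (x j).continuous.continuousOn
  refine ⟨fun j => ?_, ?_⟩
  · obtain ⟨t, ht, heq, -⟩ := hmin j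
    have hle := (Finset.le_sup' (fun i => (r i)⁻¹ * sInf (x i '' S i))
      (Finset.mem_univ j)).trans hx.le
    rw [heq, inv_mul_le_iff₀ (hr j), mul_one] at hle
    exact ⟨t, ht, hle⟩
  · obtain ⟨i, -, hi⟩ := Finset.exists_mem_eq_sup' Finset.univ_nonempty
      fun i => (r i)⁻¹ * sInf (x i '' S i)
    obtain ⟨t, -, heq, hle⟩ := hmin i
    have hval : x i t = r i := by
      rw [← heq, eq_comm, ← inv_mul_eq_one₀ (hr i).ne', ← hx]
      exact hi.symm
    exact ⟨i, fun s hs => hval.symm.trans_le (hle s hs)⟩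

end Functionals

variable [CompactSpace X]

/-- The cone of tuples of functions whose `i`-th entry is at least `c i` times its norm on `S i`. -/
def harnackCone (S : ι → Set X) (c : ι → ℝ≥0) : PointedCone ℝ (ι → C(X, ℝ)) where
  carrier := {x | ∀ i, ∀ t ∈ S i, c i * ‖x i‖ ≤ x i t}
  zero_mem' := by simp
  add_mem' {x y} hx hy i t ht :=
    (mul_le_mul_of_nonneg_left (norm_add_le (x i) (y i)) (c i).2).trans
      ((mul_add _ _ _).trans_le (add_le_add (hx i t ht) (hy i t ht)))
  smul_mem' l x hx i t ht := by
    have hnorm : ‖(l • x) i‖ = l * ‖x i‖ := norm_smul_of_nonneg l.2 (x i)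
    rw [hnorm, mul_left_comm]
    exact mul_le_mul_of_nonneg_left (hx i t ht) l.2

/-- The superposition (Nemytskii) operator `x ↦ g(·, x(·))`. -/
def superposition (g : C(X × (ι → ℝ), ℝ)) (x : ι → C(X, ℝ)) : C(X, ℝ) :=
  g.comp ((ContinuousMap.id X).prodMk (ContinuousMap.pi x))

variable {S : ι → Set X} {c : ι → ℝ≥0}

theorem mem_harnackCone {x : ι → C(X, ℝ)} :
    x ∈ harnackCone S c ↔ ∀ i, ∀ t ∈ S i, c i * ‖x i‖ ≤ x i t := Iff.rfl

theorem const_mem_harnackCone (hc : ∀ i, c i ≤ 1) {δ : ℝ} (hδ : 0 ≤ δ) :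
    (fun _ => ContinuousMap.const X δ) ∈ harnackCone S c := fun i t _ => by
  have hnorm : ‖ContinuousMap.const X δ‖ ≤ δ :=
    (ContinuousMap.norm_le _ hδ).2 fun _ => (Real.norm_of_nonneg hδ).le
  exact (mul_le_of_le_one_left (norm_nonneg _) (NNReal.coe_le_one.2 (hc i))).trans hnorm

theorem isClosed_harnackCone : IsClosed (harnackCone S c : Set (ι → C(X, ℝ))) := by
  have h : (harnackCone S c : Set (ι → C(X, ℝ))) =
      ⋂ i, ⋂ t ∈ S i, {x | c i * ‖x i‖ ≤ x i t} := by
    ext x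
    simp only [SetLike.mem_coe, mem_harnackCone, mem_iInter, mem_ofPred_eq]
  rw [h]
  exact isClosed_iInter fun i => isClosed_biInter fun t _ =>
    isClosed_le (by fun_prop) (by fun_prop)

theorem continuous_superposition [T2Space X] (g : C(X × (ι → ℝ), ℝ)) :
    Continuous (superposition g) :=
  ContinuousMap.continuous_of_continuous_uncurry _ <| g.continuous.comp <|
    continuous_snd.prodMk <| continuous_pi fun i =>
      ((continuous_apply i).comp continuous_fst).eval continuous_snd

section Gauges

variable [Fintype ι]

theorem exists_norm_superposition_le (g : C(X × (ι → ℝ), ℝ)) (R : ℝ) :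
    ∃ B, ∀ x : ι → C(X, ℝ), ‖x‖ ≤ R → ‖superposition g x‖ ≤ B := by
  obtain ⟨B, hB⟩ := (((isCompact_univ (X := X)).prod
    (isCompact_closedBall (0 : ι → ℝ) R)).image g.continuous).isBounded.exists_norm_le
  refine ⟨max B 0, fun x hx => (ContinuousMap.norm_le _ (le_max_right _ _)).2 fun t => ?_⟩
  refine (hB _ ⟨(t, fun i => x i t), ⟨mem_univ _, ?_⟩, rfl⟩).trans (le_max_left _ _)
  rw [mem_closedBall_zero_iff]
  exact (pi_norm_le_iff_of_nonneg ((norm_nonneg x).trans hx)).2 fun i =>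
    ((x i).norm_coe_le_norm t).trans ((norm_le_pi_norm x i).trans hx)

theorem exists_pos_mul_pi_norm_le (E : Type*) [SeminormedAddCommGroup E] [Nonempty ι] {d : ι → ℝ}
    (hd : ∀ i, 0 < d i) : ∃ κ > 0, ∀ (x : ι → E) (B : ℝ), (∀ i, d i * ‖x i‖ ≤ B) → κ * ‖x‖ ≤ B := by
  obtain ⟨i₀, hi₀⟩ := Finite.exists_min d
  refine ⟨d i₀, hd i₀, fun x B hB => ?_⟩
  rw [← le_div_iff₀' (hd i₀), pi_norm_le_iff_of_nonempty]
  exact fun i => (le_div_iff₀' (hd i₀)).2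
    ((mul_le_mul_of_nonneg_right (hi₀ i) (norm_nonneg _)).trans (hB i))

/-- The gauge `x ↦ maxᵢ ‖xᵢ‖ / ρᵢ`. -/
noncomputable def maxNormGauge (ρ : ι → ℝ) (x : ι → C(X, ℝ)) : ℝ := ‖fun i => (ρ i)⁻¹ • x i‖

theorem maxNormGauge_le_one_iff {ρ : ι → ℝ} (hρ : ∀ i, 0 < ρ i) {x : ι → C(X, ℝ)} :
    maxNormGauge ρ x ≤ 1 ↔ ∀ i, ‖x i‖ ≤ ρ i := by
  refine (pi_norm_le_iff_of_nonneg zero_le_one).trans (forall_congr' fun i => ?_)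
  have hnorm : ‖(ρ i)⁻¹ • x i‖ = (ρ i)⁻¹ * ‖x i‖ := norm_smul_of_nonneg (inv_pos.2 (hρ i)).le (x i)
  rw [hnorm, inv_mul_le_iff₀ (hρ i), mul_one]

theorem maxNormGauge_smul {ρ : ι → ℝ} {t : ℝ} (ht : 0 ≤ t) (x : ι → C(X, ℝ)) :
    maxNormGauge ρ (t • x) = t * maxNormGauge ρ x := by
  rw [maxNormGauge, maxNormGauge, ← norm_smul_of_nonneg ht]
  congr 1
  exact funext fun i => smul_comm (ρ i)⁻¹ t (x i)

theorem mul_norm_le_sumEval {z : ι → X} (hz : ∀ i, z i ∈ S i) {x : ι → C(X, ℝ)}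
    (hx : x ∈ harnackCone S c) (i : ι) : c i * ‖x i‖ ≤ sumEval z x := by
  rw [sumEval_apply]
  exact (hx i _ (hz i)).trans (Finset.single_le_sum (f := fun j => x j (z j))
    (fun j _ => (mul_nonneg (c j).2 (norm_nonneg _)).trans (hx j _ (hz j))) (Finset.mem_univ i))

variable [Nonempty ι]

theorem isConeGauge_maxNormGauge {ρ : ι → ℝ} (hρ : ∀ i, 0 < ρ i) :
    IsConeGauge (harnackCone S c) (maxNormGauge ρ) where
  continuous := by unfold maxNormGauge; fun_prop
  smul _ ht x := maxNormGauge_smul ht x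
  exists_mul_norm_le := by
    obtain ⟨κ, hκ, hle⟩ := exists_pos_mul_pi_norm_le C(X, ℝ) fun i => inv_pos.2 (hρ i)
    refine ⟨κ, hκ, fun x _ => hle x _ fun i => ?_⟩
    rw [← norm_smul_of_nonneg (inv_nonneg.2 (hρ i).le)]
    exact norm_le_pi_norm (fun i => (ρ i)⁻¹ • x i) i

theorem isConeGauge_maxMinGauge (hS : ∀ i, IsCompact (S i)) (hne : ∀ i, (S i).Nonempty)
    (hc : ∀ i, 0 < c i) {r : ι → ℝ} (hr : ∀ i, 0 < r i) :
    IsConeGauge (harnackCone S c) (maxMinGauge S r) where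
  continuous := Continuous.finset_sup'_apply _ fun i _ => continuous_const.mul
    ((hS i).continuous_sInf (((continuous_apply i).comp continuous_fst).eval continuous_snd))
  smul t ht x := by
    have hmin : ∀ i, sInf ((t • x) i '' S i) = t * sInf (x i '' S i) := fun i => by
      rw [← smul_eq_mul, ← Real.sInf_smul_of_nonneg ht, ← image_smul, image_image]
      rfl
    simp only [maxMinGauge, hmin, mul_left_comm _ t]
    exact (Finset.apply_sup'_eq_sup'_comp _ (t * ·) fun a b => mul_max_of_nonneg a b ht).symm
  exists_mul_norm_le := by
    obtain ⟨κ, hκ, hle⟩ := exists_pos_mul_pi_norm_le C(X, ℝ)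
      fun i => mul_pos (inv_pos.2 (hr i)) (NNReal.coe_pos.2 (hc i))
    refine ⟨κ, hκ, fun x hx => hle x _ fun i => ?_⟩
    refine le_trans ?_ (Finset.le_sup' _ (Finset.mem_univ i))
    rw [mul_assoc]
    refine mul_le_mul_of_nonneg_left (le_csInf ((hne i).image _) ?_) (inv_nonneg.2 (hr i).le)
    exact forall_mem_image.2 (hx i)


end Gauges

variable [MeasurableSpace X] [BorelSpace X] {μ : Measure X} [IsFiniteMeasure μ]
  {k : ι → C(X × X, ℝ)} {g : ι → C(X × (ι → ℝ), ℝ)}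

variable (μ k g) in
/-- The Hammerstein operator `x ↦ (∫ kᵢ(·, s) gᵢ(s, x(s)) dμ(s))ᵢ`. -/
noncomputable def hammerstein (x : ι → C(X, ℝ)) (i : ι) : C(X, ℝ) :=
  kernelOperator μ (k i) (superposition (g i) x)

theorem continuous_hammerstein [T2Space X] : Continuous (hammerstein μ k g) :=
  continuous_pi fun i => (kernelOperator μ (k i)).continuous.comp (continuous_superposition (g i))

theorem hammerstein_mem_harnackCone (hg : ∀ i p, 0 ≤ g i p) {Φ : ι → C(X, ℝ)}
    (hΦ : ∀ i t s, |k i (t, s)| ≤ Φ i s) (hk : ∀ i, ∀ t ∈ S i, ∀ s, c i * Φ i s ≤ k i (t, s))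
    (x : ι → C(X, ℝ)) : hammerstein μ k g x ∈ harnackCone S c := fun i t ht =>
  mul_norm_kernelOperator_le_apply (w := superposition (g i) x) (fun _ => hg i _) (hΦ i) (c i).2
    (hk i t ht)

theorem norm_hammerstein_le (hg : ∀ i p, 0 ≤ g i p) {ρ m : ι → ℝ} (hρ : ∀ i, 0 < ρ i)
    (hm : ∀ i t, 0 ≤ m i ∧ m i * ∫ s, |k i (t, s)| ∂μ ≤ 1)
    (hsmall : ∀ i t z, (∀ j, |z j| ≤ ρ j) → g i (t, z) ≤ m i * ρ i) {x : ι → C(X, ℝ)}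
    (hx : ∀ i, ‖x i‖ ≤ ρ i) (i : ι) : ‖hammerstein μ k g x i‖ ≤ ρ i := by
  refine (ContinuousMap.norm_le _ (hρ i).le).2 fun t => ?_
  have hgx : ‖superposition (g i) x‖ ≤ m i * ρ i :=
    (ContinuousMap.norm_le _ (mul_nonneg (hm i t).1 (hρ i).le)).2 fun s =>
      (abs_of_nonneg (hg i _)).trans_le
        (hsmall i s _ fun j => ((x j).norm_coe_le_norm s).trans (hx j))
  calc |hammerstein μ k g x i t| ≤ (∫ s, |k i (t, s)| ∂μ) * (m i * ρ i) :=
        abs_kernelOperator_apply_le hgx t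
    _ = (m i * ∫ s, |k i (t, s)| ∂μ) * ρ i := by ring
    _ ≤ ρ i := mul_le_of_le_one_left (hρ i).le (hm i t).2

theorem le_hammerstein_apply (hg : ∀ i p, 0 ≤ g i p) {i : ι} (hS : MeasurableSet (S i)) {t : X}
    (hk : ∀ s, 0 ≤ k i (t, s)) {M : ℝ} {r : ι → ℝ} (hr : 0 ≤ r i)
    (hM : 1 ≤ M * ∫ s in S i, k i (t, s) ∂μ) {x : ι → C(X, ℝ)}
    (hlarge : ∀ s ∈ S i, M * r i ≤ g i (s, fun j => x j s)) :
    r i ≤ hammerstein μ k g x i t :=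
  calc r i ≤ (M * ∫ s in S i, k i (t, s) ∂μ) * r i := le_mul_of_one_le_left hr hM
    _ = (∫ s in S i, k i (t, s) ∂μ) * (M * r i) := by ring
    _ ≤ hammerstein μ k g x i t :=
        setIntegral_mul_le_kernelOperator_apply (w := superposition (g i) x)
          (fun _ => hg i _) hk hS hlarge

theorem exists_isCompact_mapsTo_hammerstein [Fintype ι] (R : ℝ) :
    ∃ Q, IsCompact Q ∧ MapsTo (hammerstein μ k g) (closedBall 0 R) Q := by
  choose B hB using fun i => exists_norm_superposition_le (g i) R
  choose Q hQ hsub using fun i => IsCompactOperator.image_closedBall_subset_compact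
    (f := (kernelOperator μ (k i) : C(X, ℝ) →ₗ[ℝ] C(X, ℝ))) (isCompactOperator_kernelOperator (k i))
    (B i)
  refine ⟨univ.pi Q, isCompact_univ_pi hQ, fun x hx i _ => hsub i (mem_image_of_mem _ ?_)⟩
  exact mem_closedBall_zero_iff.2 (hB i x (mem_closedBall_zero_iff.1 hx))

theorem hammerstein_ne_smul (hg : ∀ i p, 0 ≤ g i p) {ρ m : ι → ℝ} (hρ : ∀ i, 0 < ρ i)
    (hm : ∀ i t, 0 ≤ m i ∧ m i * ∫ s, |k i (t, s)| ∂μ ≤ 1)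
    (hsmall : ∀ i t z, (∀ j, |z j| ≤ ρ j) → g i (t, z) ≤ m i * ρ i) [Fintype ι]
    {x : ι → C(X, ℝ)} (hx : maxNormGauge ρ x = 1) {l : ℝ} (hl : 1 < l) :
    hammerstein μ k g x ≠ l • x := fun h => by
  have hle := norm_hammerstein_le hg hρ hm hsmall ((maxNormGauge_le_one_iff hρ).1 hx.le)
  rw [← maxNormGauge_le_one_iff hρ, h, maxNormGauge_smul (zero_le_one.trans hl.le), hx] at hle
  linarith

theorem hammerstein_add_const_ne [T2Space X] [Fintype ι] [Nonempty ι] (hS : ∀ i, IsCompact (S i))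
    (hne : ∀ i, (S i).Nonempty) (hc : ∀ i, 0 < c i) (hg : ∀ i p, 0 ≤ g i p)
    (hk : ∀ i, ∀ t ∈ S i, ∀ s, 0 ≤ k i (t, s)) {r M : ι → ℝ} (hr : ∀ i, 0 < r i)
    (hM : ∀ i, ∀ t ∈ S i, 1 ≤ M i * ∫ s in S i, k i (t, s) ∂μ)
    (hlarge : ∀ i, ∀ t ∈ S i, ∀ z, r i ≤ z i → (∀ j, |z j| ≤ r j / c j) → M i * r i ≤ g i (t, z))
    {x : ι → C(X, ℝ)} (hx : x ∈ harnackCone S c) (hxr : maxMinGauge S r x = 1) {δ : ℝ}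
    (hδ : 0 < δ) :
    hammerstein μ k g x + (fun _ => ContinuousMap.const X δ) ≠ x := fun h => by
  obtain ⟨hle, i, hge⟩ := exists_le_apply_of_maxMinGauge_eq_one hS hne hr hxr
  have hnorm : ∀ j, ‖x j‖ ≤ r j / c j := fun j => by
    obtain ⟨t, ht, htr⟩ := hle j
    exact (le_div_iff₀' (NNReal.coe_pos.2 (hc j))).2 ((hx j t ht).trans htr)
  obtain ⟨t, ht, htr⟩ := hle i
  have hTx : r i ≤ hammerstein μ k g x i t :=
    le_hammerstein_apply hg (hS i).measurableSet (hk i t ht) (hr i).le (hM i t ht) fun s hs =>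
      hlarge i s hs _ (hge s hs) fun j => ((x j).norm_coe_le_norm s).trans (hnorm j)
  have hsum : hammerstein μ k g x i t + δ = x i t := DFunLike.congr_fun (congrFun h i) t
  linarith

theorem exists_hammerstein_fixedPoint [T2Space X] [Finite ι] [Nonempty ι]
    (hS : ∀ i, IsCompact (S i)) (hne : ∀ i, (S i).Nonempty)
    (hc : ∀ i, 0 < c i) (hc1 : ∀ i, c i ≤ 1) (hg : ∀ i p, 0 ≤ g i p) {Φ : ι → C(X, ℝ)}
    (hΦ : ∀ i t s, |k i (t, s)| ≤ Φ i s) (hk : ∀ i, ∀ t ∈ S i, ∀ s, c i * Φ i s ≤ k i (t, s))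
    {ρ r m M : ι → ℝ} (hρ : ∀ i, 0 < ρ i) (hr : ∀ i, 0 < r i)
    (hm : ∀ i t, 0 ≤ m i ∧ m i * ∫ s, |k i (t, s)| ∂μ ≤ 1)
    (hM : ∀ i, ∀ t ∈ S i, 1 ≤ M i * ∫ s in S i, k i (t, s) ∂μ)
    (hsmall : ∀ i t z, (∀ j, |z j| ≤ ρ j) → g i (t, z) ≤ m i * ρ i)
    (hlarge : ∀ i, ∀ t ∈ S i, ∀ z, r i ≤ z i → (∀ j, |z j| ≤ r j / c j) → M i * r i ≤ g i (t, z)) :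
    ∃ x ∈ harnackCone S c, x ≠ 0 ∧ hammerstein μ k g x = x := by
  cases nonempty_fintype ι
  choose z hz using hne
  obtain ⟨κ, hκ, hle⟩ := exists_pos_mul_pi_norm_le C(X, ℝ) fun i => NNReal.coe_pos.2 (hc i)
  have hk0 : ∀ i, ∀ t ∈ S i, ∀ s, 0 ≤ k i (t, s) := fun i t ht s =>
    (mul_nonneg (c i).2 ((abs_nonneg _).trans (hΦ i t s))).trans (hk i t ht s)
  have hcard : (0 : ℝ) < (Fintype.card ι : ℝ)⁻¹ := inv_pos.2 (Nat.cast_pos.2 Fintype.card_pos)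
  refine exists_fixedPoint_of_coneExpansion (isClosed_harnackCone (S := S) (c := c))
    (ℓ := sumEval z) (e := fun _ => ContinuousMap.const X (Fintype.card ι : ℝ)⁻¹)
    ⟨const_mem_harnackCone hc1 hcard.le, ?_⟩ hκ
    (fun x hx => hle x _ fun i => mul_norm_le_sumEval hz hx i)
    (isConeGauge_maxNormGauge hρ) (isConeGauge_maxMinGauge hS (fun i => ⟨z i, hz i⟩) hc hr)
    continuous_hammerstein (fun x _ => hammerstein_mem_harnackCone hg hΦ hk x)
    exists_isCompact_mapsTo_hammerstein
    (fun x _ hx l hl => hammerstein_ne_smul hg hρ hm hsmall hx hl) fun x hx hxr l hl => ?_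
  · simp [sumEval_apply]
  · exact hammerstein_add_const_ne hS (fun i => ⟨z i, hz i⟩) hc hg hk0 hr hM hlarge hx hxr
      (mul_pos hl hcard)

end Hammerstein

section FractionalKernel

/-- The Green's kernel of `ᶜD^α w + y = 0`, `w'(0) = 0`, `β ᶜD^(α-1) w(1) + w(η) = 0`. -/
noncomputable def fractionalKernel (α β η t s : ℝ) : ℝ :=
  β + (if s ≤ η then (η - s) ^ (α - 1) / Real.Gamma α else 0) -
    (if s ≤ t then (t - s) ^ (α - 1) / Real.Gamma α else 0)

/-- The ratio between the lower bound of the fractional kernel for `t ≤ b` and its upper bound in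
absolute value on `[0, 1] × [0, 1]`. -/
noncomputable def coneConstant (α β η b : ℝ) : ℝ :=
  min ((β * Real.Gamma α - (b - η) ^ (α - 1)) / ((1 - η) ^ (α - 1) - β * Real.Gamma α))
    ((β * Real.Gamma α - (b - η) ^ (α - 1)) / (β * Real.Gamma α + η ^ (α - 1)))

/-- The bound for the absolute value of the fractional kernel on `[0, 1] × [0, 1]`. -/
noncomputable def kernelBound (α β η : ℝ) : ℝ :=
  max ((1 - η) ^ (α - 1) - β * Real.Gamma α) (β * Real.Gamma α + η ^ (α - 1)) / Real.Gamma α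

/-- The standing conditions on the parameters of one component of the system; `b` is the right end
of the interval on which the elements of the cone are positive. -/
structure IsAdmissible (α β η b : ℝ) : Prop where
  one_lt : 1 < α
  le_two : α ≤ 2
  nonneg : 0 ≤ η
  mul_Gamma_lt : β * Real.Gamma α < (1 - η) ^ (α - 1)
  le : η ≤ b
  lt_one : b < 1
  lt_mul_Gamma : (b - η) ^ (α - 1) < β * Real.Gamma α

theorem ite_le_sub_rpow_eq_max_rpow {p : ℝ} (hp : 0 < p) (s x : ℝ) :
    (if s ≤ x then (x - s) ^ p else 0) = max (x - s) 0 ^ p := by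
  split_ifs with h
  · rw [max_eq_left (sub_nonneg.2 h)]
  · rw [max_eq_right (sub_nonpos.2 (not_le.1 h).le), Real.zero_rpow hp.ne']

variable {α β η b : ℝ}

theorem fractionalKernel_eq_max (hα : 1 < α) (t s : ℝ) : fractionalKernel α β η t s =
    (β * Real.Gamma α + max (η - s) 0 ^ (α - 1) - max (t - s) 0 ^ (α - 1)) / Real.Gamma α := by
  have hG : Real.Gamma α ≠ 0 := (Real.Gamma_pos_of_pos (zero_lt_one.trans hα)).ne'
  rw [← ite_le_sub_rpow_eq_max_rpow (sub_pos.2 hα), ← ite_le_sub_rpow_eq_max_rpow (sub_pos.2 hα),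
    fractionalKernel]
  split_ifs <;> field_simp <;> ring

theorem continuous_fractionalKernel (hα : 1 < α) :
    Continuous fun p : ℝ × ℝ => fractionalKernel α β η p.1 p.2 := by
  simp only [fractionalKernel_eq_max hα]
  have hp : 0 ≤ α - 1 := (sub_pos.2 hα).le
  exact (((continuous_const.add (Continuous.rpow_const (by fun_prop) fun _ => Or.inr hp)).sub
    (Continuous.rpow_const (by fun_prop) fun _ => Or.inr hp)).div_const _)

theorem fractionalKernel_le (hα : 1 < α) (hη : 0 ≤ η) (t : ℝ) {s : ℝ} (hs : 0 ≤ s) :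
    fractionalKernel α β η t s ≤ (β * Real.Gamma α + η ^ (α - 1)) / Real.Gamma α := by
  rw [fractionalKernel_eq_max hα]
  have hG := (Real.Gamma_pos_of_pos (zero_lt_one.trans hα)).le
  have hle : max (η - s) 0 ^ (α - 1) ≤ η ^ (α - 1) :=
    Real.rpow_le_rpow (le_max_right _ _) (max_le (sub_le_self η hs) hη) (sub_pos.2 hα).le
  have hnonneg : 0 ≤ max (t - s) 0 ^ (α - 1) := Real.rpow_nonneg (le_max_right _ _) _
  exact div_le_div_of_nonneg_right (by linarith) hG

-- Subadditivity of `x ↦ x ^ (α - 1)`, applied to `(t - s)⁺ ≤ (b - η) + (η - s)⁺`.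
theorem le_fractionalKernel (hα : 1 < α) (hα' : α ≤ 2) (hηb : η ≤ b) {t : ℝ} (ht : t ≤ b) (s : ℝ) :
    (β * Real.Gamma α - (b - η) ^ (α - 1)) / Real.Gamma α ≤ fractionalKernel α β η t s := by
  rw [fractionalKernel_eq_max hα]
  have hG := (Real.Gamma_pos_of_pos (zero_lt_one.trans hα)).le
  have hp : 0 ≤ α - 1 := (sub_pos.2 hα).le
  have hle : max (t - s) 0 ^ (α - 1) ≤ (b - η) ^ (α - 1) + max (η - s) 0 ^ (α - 1) :=
    (Real.rpow_le_rpow (le_max_right _ _) (by grind) hp).trans (Real.rpow_add_le_add_rpow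
      (sub_nonneg.2 hηb) (le_max_right _ _) hp (by linarith))
  exact div_le_div_of_nonneg_right (by linarith) hG

theorem abs_fractionalKernel_le (hα : 1 < α) (hα' : α ≤ 2) (hη : 0 ≤ η) (hη' : η ≤ 1) {t s : ℝ}
    (ht : t ≤ 1) (hs : 0 ≤ s) : |fractionalKernel α β η t s| ≤ kernelBound α β η := by
  have hG := (Real.Gamma_pos_of_pos (zero_lt_one.trans hα)).le
  refine abs_le'.2 ⟨(fractionalKernel_le hα hη t hs).trans ?_,
    (neg_le_neg (le_fractionalKernel hα hα' hη' ht s)).trans ?_⟩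
  · exact div_le_div_of_nonneg_right (le_max_right _ _) hG
  · rw [← neg_div, neg_sub]
    exact div_le_div_of_nonneg_right (le_max_left _ _) hG

theorem min_div_mul_max {a x y : ℝ} (ha : 0 ≤ a) (hx : 0 < x) (hy : 0 < y) :
    min (a / x) (a / y) * max x y = a := by
  rcases le_total x y with h | h
  · rw [max_eq_right h, min_eq_right (div_le_div_of_nonneg_left ha hx h), div_mul_cancel₀ _ hy.ne']
  · rw [max_eq_left h, min_eq_left (div_le_div_of_nonneg_left ha hy h), div_mul_cancel₀ _ hx.ne']

namespace IsAdmissible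

variable (h : IsAdmissible α β η b)
include h

theorem zero_le : 0 ≤ b := h.nonneg.trans h.le

theorem Gamma_pos : 0 < Real.Gamma α := Real.Gamma_pos_of_pos (zero_lt_one.trans h.one_lt)

theorem mul_Gamma_pos : 0 < β * Real.Gamma α :=
  (Real.rpow_nonneg (sub_nonneg.2 h.le) _).trans_lt h.lt_mul_Gamma

theorem mul_Gamma_add_rpow_pos : 0 < β * Real.Gamma α + η ^ (α - 1) :=
  add_pos_of_pos_of_nonneg h.mul_Gamma_pos (Real.rpow_nonneg h.nonneg _)

theorem coneConstant_pos : 0 < coneConstant α β η b :=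
  lt_min (div_pos (sub_pos.2 h.lt_mul_Gamma) (sub_pos.2 h.mul_Gamma_lt))
    (div_pos (sub_pos.2 h.lt_mul_Gamma) h.mul_Gamma_add_rpow_pos)

theorem coneConstant_le_one : coneConstant α β η b ≤ 1 :=
  (min_le_right _ _).trans <| (div_le_one h.mul_Gamma_add_rpow_pos).2 <| by
    linarith [Real.rpow_nonneg (sub_nonneg.2 h.le) (α - 1), Real.rpow_nonneg h.nonneg (α - 1)]

theorem coneConstant_mul_kernelBound_le {t : ℝ} (ht : t ≤ b) (s : ℝ) :
    coneConstant α β η b * kernelBound α β η ≤ fractionalKernel α β η t s := by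
  rw [coneConstant, kernelBound, ← mul_div_assoc, min_div_mul_max (sub_pos.2 h.lt_mul_Gamma).le
    (sub_pos.2 h.mul_Gamma_lt) h.mul_Gamma_add_rpow_pos]
  exact le_fractionalKernel h.one_lt h.le_two h.le ht s

theorem abs_kernel_le {t s : ℝ} (ht : t ≤ 1) (hs : 0 ≤ s) :
    |fractionalKernel α β η t s| ≤ kernelBound α β η :=
  abs_fractionalKernel_le h.one_lt h.le_two h.nonneg (h.le.trans h.lt_one.le) ht hs

theorem kernel_nonneg {t : ℝ} (ht : t ≤ b) (s : ℝ) : 0 ≤ fractionalKernel α β η t s :=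
  (div_nonneg (sub_pos.2 h.lt_mul_Gamma).le h.Gamma_pos.le).trans
    (le_fractionalKernel h.one_lt h.le_two h.le ht s)

theorem mul_integral_abs_kernel_le_one {m : ℝ} (hm : 0 < m)
    (hsup : 1 / m = ⨆ t : Icc (0 : ℝ) 1, ∫ s in (0 : ℝ)..1, |fractionalKernel α β η t s|)
    {t : ℝ} (ht : t ∈ Icc (0 : ℝ) 1) : m * ∫ s in (0 : ℝ)..1, |fractionalKernel α β η t s| ≤ 1 := by
  have hbdd : BddAbove (range fun t : Icc (0 : ℝ) 1 =>
      ∫ s in (0 : ℝ)..1, |fractionalKernel α β η t s|) := by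
    refine ⟨kernelBound α β η * |1 - 0|, forall_mem_range.2 fun t => (Real.le_norm_self _).trans <|
      intervalIntegral.norm_integral_le_of_norm_le_const fun s hs => ?_⟩
    rw [uIoc_of_le zero_le_one] at hs
    simpa using h.abs_kernel_le t.2.2 hs.1.le
  rw [mul_comm, ← le_div_iff₀ hm, hsup]
  exact le_ciSup hbdd ⟨t, ht⟩

theorem one_le_mul_integral_kernel {M : ℝ} (hM : 0 < M)
    (hinf : 1 / M = ⨅ t : Icc (0 : ℝ) b, ∫ s in (0 : ℝ)..b, fractionalKernel α β η t s)
    {t : ℝ} (ht : t ∈ Icc 0 b) : 1 ≤ M * ∫ s in (0 : ℝ)..b, fractionalKernel α β η t s := by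
  have hbdd : BddBelow (range fun t : Icc (0 : ℝ) b =>
      ∫ s in (0 : ℝ)..b, fractionalKernel α β η t s) :=
    ⟨0, forall_mem_range.2 fun t => intervalIntegral.integral_nonneg h.zero_le fun s _ =>
      h.kernel_nonneg t.2.2 s⟩
  rw [mul_comm, ← div_le_iff₀ hM, hinf]
  exact ciInf_le hbdd ⟨t, ht⟩

end IsAdmissible

end FractionalKernel

section UnitInterval

open unitInterval

theorem setIntegral_unitInterval {b : ℝ} (hb : b ∈ I) (F : ℝ → ℝ) :
    ∫ s in {s : I | (s : ℝ) ≤ b}, F s = ∫ s in (0 : ℝ)..b, F s := by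
  rw [intervalIntegral.integral_of_le hb.1, ← integral_Icc_eq_integral_Ioc]
  have hS : {s : I | (s : ℝ) ≤ b} = ((↑) : I → ℝ) ⁻¹' Icc 0 b := by
    ext s; simp [s.2.1]
  have hmap : (volume : Measure I).map ((↑) : I → ℝ) = volume.restrict I :=
    map_comap_subtype_coe measurableSet_Icc volume
  rw [hS, ← (MeasurableEmbedding.subtype_coe measurableSet_Icc).setIntegral_map, hmap,
    Measure.restrict_restrict measurableSet_Icc, inter_eq_left.2 (Icc_subset_Icc_right hb.2)]

theorem integral_unitInterval (F : ℝ → ℝ) : ∫ s : I, F s = ∫ s in (0 : ℝ)..1, F s := by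
  rw [← setIntegral_unitInterval unitInterval.one_mem, ← setIntegral_univ]
  congr 2
  ext s
  simp [s.2.2]

theorem supNorm_IccExtend (w : C(I, ℝ)) : supNorm (IccExtend zero_le_one w) = ‖w‖ := by
  rw [supNorm, ContinuousMap.norm_eq_iSup_norm]
  simp only [IccExtend_val, Real.norm_eq_abs]

theorem le_infOn_IccExtend {w : C(I, ℝ)} {b a : ℝ} (hb : b ∈ I)
    (h : ∀ t : I, (t : ℝ) ≤ b → a ≤ w t) : a ≤ infOn 0 b (IccExtend zero_le_one w) := by
  have : Nonempty (Icc 0 b) := ⟨⟨0, left_mem_Icc.2 hb.1⟩⟩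
  refine le_ciInf fun t => ?_
  rw [IccExtend_of_mem _ _ ⟨t.2.1, t.2.2.trans hb.2⟩]
  exact h _ t.2.2

end UnitInterval

section FractionalSystem

open unitInterval
open scoped NNReal

theorem exists_fractional_hammerstein_fixedPoint {ι : Type*} [Finite ι] [Nonempty ι]
    {α β η b : ι → ℝ} (h : ∀ i, IsAdmissible (α i) (β i) (η i) (b i))
    {k : ι → C(I × I, ℝ)} (hk : ∀ i t s, k i (t, s) = fractionalKernel (α i) (β i) (η i) t s)
    {c : ι → ℝ≥0} (hc : ∀ i, (c i : ℝ) = coneConstant (α i) (β i) (η i) (b i))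
    {g : ι → C(I × (ι → ℝ), ℝ)} (hg : ∀ i p, 0 ≤ g i p)
    {ρ r m M : ι → ℝ} (hρ : ∀ i, 0 < ρ i) (hr : ∀ i, 0 < r i)
    (hm : ∀ i, 0 < m i) (hM : ∀ i, 0 < M i)
    (hsup : ∀ i, 1 / m i =
      ⨆ t : Icc (0 : ℝ) 1, ∫ s in (0 : ℝ)..1, |fractionalKernel (α i) (β i) (η i) t s|)
    (hinf : ∀ i, 1 / M i =
      ⨅ t : Icc (0 : ℝ) (b i), ∫ s in (0 : ℝ)..b i, fractionalKernel (α i) (β i) (η i) t s)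
    (hsmall : ∀ i (t : I) z, (∀ j, |z j| ≤ ρ j) → g i (t, z) ≤ m i * ρ i)
    (hlarge : ∀ i (t : I) z, (t : ℝ) ≤ b i → r i ≤ z i → (∀ j, |z j| ≤ r j / c j) →
      M i * r i ≤ g i (t, z)) :
    ∃ x ∈ harnackCone (fun i => {t : I | (t : ℝ) ≤ b i}) c,
      x ≠ 0 ∧ hammerstein volume k g x = x := by
  refine exists_hammerstein_fixedPoint
    (Φ := fun i => ContinuousMap.const I (kernelBound (α i) (β i) (η i)))
    (fun i => (isClosed_le continuous_subtype_val continuous_const).isCompact)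
    (fun i => ⟨0, (h i).zero_le⟩)
    (fun i => NNReal.coe_pos.1 ((hc i).symm ▸ (h i).coneConstant_pos))
    (fun i => NNReal.coe_le_one.1 ((hc i).symm ▸ (h i).coneConstant_le_one))
    hg (fun i t s => ?_) (fun i t ht s => ?_) hρ hr (fun i t => ⟨(hm i).le, ?_⟩) (fun i t ht => ?_)
    hsmall fun i t ht z => hlarge i t z ht
  · rw [hk]
    exact (h i).abs_kernel_le t.2.2 s.2.1
  · rw [hk, hc]
    exact (h i).coneConstant_mul_kernelBound_le ht s
  · simp only [hk]
    rw [integral_unitInterval fun s => |fractionalKernel (α i) (β i) (η i) t s|]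
    exact (h i).mul_integral_abs_kernel_le_one (hm i) (hsup i) t.2
  · simp only [hk]
    rw [setIntegral_unitInterval ⟨(h i).zero_le, (h i).lt_one.le⟩
      (fractionalKernel (α i) (β i) (η i) t)]
    exact (h i).one_le_mul_integral_kernel (hM i) (hinf i) ⟨t.2.1, ht⟩

/-- The fractional kernel as a continuous map on the unit square. -/
noncomputable def fractionalKernelMap {α : ℝ} (hα : 1 < α) (β η : ℝ) : C(I × I, ℝ) where
  toFun p := fractionalKernel α β η p.1 p.2
  continuous_toFun := (continuous_fractionalKernel hα).comp
    (continuous_subtype_val.prodMap continuous_subtype_val)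

/-- A nonlinearity on `[0, 1] × ℝ × ℝ` as a continuous map, its last two arguments being collected
in a vector. -/
def pairNonlinearity {f : ℝ → ℝ → ℝ → ℝ}
    (hf : ContinuousOn (fun p : ℝ × ℝ × ℝ => f p.1 p.2.1 p.2.2) (I ×ˢ univ)) :
    C(I × (Fin 2 → ℝ), ℝ) where
  toFun p := f p.1 (p.2 0) (p.2 1)
  continuous_toFun := hf.comp_continuous
    (f := fun p : I × (Fin 2 → ℝ) => ((p.1 : ℝ), p.2 0, p.2 1)) (by fun_prop)
    fun p => ⟨p.1.2, mem_univ _⟩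

theorem kernelOperator_superposition_pair_apply {α β η : ℝ} (hα : 1 < α) {f : ℝ → ℝ → ℝ → ℝ}
    (hf : ContinuousOn (fun p : ℝ × ℝ × ℝ => f p.1 p.2.1 p.2.2) (I ×ˢ univ))
    (x : Fin 2 → C(I, ℝ)) (t : I) :
    kernelOperator volume (fractionalKernelMap hα β η) (superposition (pairNonlinearity hf) x) t =
      ∫ s in (0 : ℝ)..1, fractionalKernel α β η t s *
        f s (IccExtend zero_le_one (x 0) s) (IccExtend zero_le_one (x 1) s) := by
  rw [kernelOperator_apply, ← integral_unitInterval]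
  simp only [IccExtend_val]
  rfl

theorem fractional_system_existence_general
    {α₁ α₂ β₁ β₂ η₁ η₂ b₁ b₂ : ℝ}
    (h₁ : IsAdmissible α₁ β₁ η₁ b₁) (h₂ : IsAdmissible α₂ β₂ η₂ b₂)
    {f₁ f₂ : ℝ → ℝ → ℝ → ℝ}
    (hf₁ : ContinuousOn (fun p : ℝ × ℝ × ℝ => f₁ p.1 p.2.1 p.2.2) (Icc 0 1 ×ˢ univ))
    (hf₂ : ContinuousOn (fun p : ℝ × ℝ × ℝ => f₂ p.1 p.2.1 p.2.2) (Icc 0 1 ×ˢ univ))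
    (hf₁nn : ∀ t ∈ Icc (0 : ℝ) 1, ∀ x y : ℝ, 0 ≤ f₁ t x y)
    (hf₂nn : ∀ t ∈ Icc (0 : ℝ) 1, ∀ x y : ℝ, 0 ≤ f₂ t x y)
    {m₁ m₂ M₁ M₂ : ℝ} (hm₁pos : 0 < m₁) (hm₂pos : 0 < m₂)
    (hm₁ : 1 / m₁ = ⨆ t : Icc (0 : ℝ) 1, ∫ s in (0 : ℝ)..1, |fractionalKernel α₁ β₁ η₁ t s|)
    (hm₂ : 1 / m₂ = ⨆ t : Icc (0 : ℝ) 1, ∫ s in (0 : ℝ)..1, |fractionalKernel α₂ β₂ η₂ t s|)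
    (hM₁pos : 0 < M₁) (hM₂pos : 0 < M₂)
    (hM₁ : 1 / M₁ = ⨅ t : Icc (0 : ℝ) b₁, ∫ s in (0 : ℝ)..b₁, fractionalKernel α₁ β₁ η₁ t s)
    (hM₂ : 1 / M₂ = ⨅ t : Icc (0 : ℝ) b₂, ∫ s in (0 : ℝ)..b₂, fractionalKernel α₂ β₂ η₂ t s)
    {ρ₁ ρ₂ r₁ r₂ : ℝ} (hρ₁ : 0 < ρ₁) (hρ₂ : 0 < ρ₂) (hr₁ : 0 < r₁) (hr₂ : 0 < r₂)
    (hsmall : ∀ t ∈ Icc (0 : ℝ) 1, ∀ x ∈ Icc (-ρ₁) ρ₁, ∀ y ∈ Icc (-ρ₂) ρ₂,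
      f₁ t x y ≤ m₁ * ρ₁ ∧ f₂ t x y ≤ m₂ * ρ₂)
    (hlarge₁ : ∀ t ∈ Icc 0 b₁, ∀ x ∈ Icc r₁ (r₁ / coneConstant α₁ β₁ η₁ b₁),
      ∀ y ∈ Icc (-(r₂ / coneConstant α₂ β₂ η₂ b₂)) (r₂ / coneConstant α₂ β₂ η₂ b₂),
      M₁ * r₁ ≤ f₁ t x y)
    (hlarge₂ : ∀ t ∈ Icc 0 b₂,
      ∀ x ∈ Icc (-(r₁ / coneConstant α₁ β₁ η₁ b₁)) (r₁ / coneConstant α₁ β₁ η₁ b₁),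
      ∀ y ∈ Icc r₂ (r₂ / coneConstant α₂ β₂ η₂ b₂), M₂ * r₂ ≤ f₂ t x y) :
    ∃ u v : ℝ → ℝ,
      inCone 0 b₁ (coneConstant α₁ β₁ η₁ b₁) 0 b₂ (coneConstant α₂ β₂ η₂ b₂) u v ∧
      isSolution (fractionalKernel α₁ β₁ η₁) (fractionalKernel α₂ β₂ η₂) f₁ f₂ u v ∧
      0 < max (supNorm u) (supNorm v) := by
  obtain ⟨x, hxc, hx0, hx⟩ := exists_fractional_hammerstein_fixedPoint
    (α := ![α₁, α₂]) (β := ![β₁, β₂]) (η := ![η₁, η₂]) (b := ![b₁, b₂])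
    (k := ![fractionalKernelMap h₁.one_lt β₁ η₁, fractionalKernelMap h₂.one_lt β₂ η₂])
    (c := ![⟨_, h₁.coneConstant_pos.le⟩, ⟨_, h₂.coneConstant_pos.le⟩])
    (g := ![pairNonlinearity hf₁, pairNonlinearity hf₂])
    (m := ![m₁, m₂]) (M := ![M₁, M₂]) (ρ := ![ρ₁, ρ₂]) (r := ![r₁, r₂])
    (Fin.forall_fin_two.2 ⟨h₁, h₂⟩)
    (Fin.forall_fin_two.2 ⟨fun _ _ => rfl, fun _ _ => rfl⟩)
    (Fin.forall_fin_two.2 ⟨rfl, rfl⟩)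
    (Fin.forall_fin_two.2 ⟨fun p => hf₁nn p.1 p.1.2 _ _, fun p => hf₂nn p.1 p.1.2 _ _⟩)
    (Fin.forall_fin_two.2 ⟨hρ₁, hρ₂⟩) (Fin.forall_fin_two.2 ⟨hr₁, hr₂⟩)
    (Fin.forall_fin_two.2 ⟨hm₁pos, hm₂pos⟩) (Fin.forall_fin_two.2 ⟨hM₁pos, hM₂pos⟩)
    (Fin.forall_fin_two.2 ⟨hm₁, hm₂⟩) (Fin.forall_fin_two.2 ⟨hM₁, hM₂⟩)
    (Fin.forall_fin_two.2
      ⟨fun t z hz => (hsmall t t.2 _ (abs_le.1 (hz 0)) _ (abs_le.1 (hz 1))).1,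
        fun t z hz => (hsmall t t.2 _ (abs_le.1 (hz 0)) _ (abs_le.1 (hz 1))).2⟩)
    (Fin.forall_fin_two.2
      ⟨fun t z ht hrz hz =>
        hlarge₁ t ⟨t.2.1, ht⟩ _ ⟨hrz, (abs_le.1 (hz 0)).2⟩ _ (abs_le.1 (hz 1)),
      fun t z ht hrz hz =>
        hlarge₂ t ⟨t.2.1, ht⟩ _ (abs_le.1 (hz 0)) _ ⟨hrz, (abs_le.1 (hz 1)).2⟩⟩)
  have hsol₁ t := (DFunLike.congr_fun (congrFun hx 0) t).symm.trans
    (kernelOperator_superposition_pair_apply h₁.one_lt hf₁ x t)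
  have hsol₂ t := (DFunLike.congr_fun (congrFun hx 1) t).symm.trans
    (kernelOperator_superposition_pair_apply h₂.one_lt hf₂ x t)
  refine ⟨IccExtend zero_le_one (x 0), IccExtend zero_le_one (x 1),
    ⟨(x 0).continuous.Icc_extend'.continuousOn, (x 1).continuous.Icc_extend'.continuousOn, ?_, ?_⟩,
    ⟨fun t ht => (IccExtend_of_mem _ _ ht).trans (hsol₁ ⟨t, ht⟩),
      fun t ht => (IccExtend_of_mem _ _ ht).trans (hsol₂ ⟨t, ht⟩)⟩, ?_⟩
  · rw [supNorm_IccExtend]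
    exact le_infOn_IccExtend ⟨h₁.zero_le, h₁.lt_one.le⟩ (hxc 0)
  · rw [supNorm_IccExtend]
    exact le_infOn_IccExtend ⟨h₂.zero_le, h₂.lt_one.le⟩ (hxc 1)
  · rw [supNorm_IccExtend, supNorm_IccExtend, lt_max_iff, norm_pos_iff, norm_pos_iff]
    exact not_and_or.1 fun hzero => hx0 (funext (Fin.forall_fin_two.2 hzero))

end FractionalSystem

theorem fractional_system_existence
    (α₁ α₂ β₁ β₂ η₁ η₂ b₁ b₂ c₁ c₂ : ℝ)
    (hα₁ : 1 < α₁) (hα₁' : α₁ ≤ 2) (hα₂ : 1 < α₂) (hα₂' : α₂ ≤ 2)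
    (hβ₁ : 0 < β₁) (hβ₂ : 0 < β₂)
    (hη₁ : η₁ ∈ Set.Icc (0:ℝ) 1) (hη₂ : η₂ ∈ Set.Icc (0:ℝ) 1)
    (hβη₁ : β₁ * Real.Gamma α₁ < (1 - η₁) ^ (α₁ - 1))
    (hβη₂ : β₂ * Real.Gamma α₂ < (1 - η₂) ^ (α₂ - 1))
    (hηb₁ : η₁ ≤ b₁) (hb₁ : b₁ < 1) (hβb₁ : (b₁ - η₁) ^ (α₁ - 1) < β₁ * Real.Gamma α₁)
    (hηb₂ : η₂ ≤ b₂) (hb₂ : b₂ < 1) (hβb₂ : (b₂ - η₂) ^ (α₂ - 1) < β₂ * Real.Gamma α₂)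
    (k₁ k₂ : ℝ → ℝ → ℝ)
    (hk₁ : ∀ t s : ℝ, k₁ t s =
      β₁ + (if s ≤ η₁ then (η₁ - s) ^ (α₁ - 1) / Real.Gamma α₁ else 0) -
        (if s ≤ t then (t - s) ^ (α₁ - 1) / Real.Gamma α₁ else 0))
    (hk₂ : ∀ t s : ℝ, k₂ t s =
      β₂ + (if s ≤ η₂ then (η₂ - s) ^ (α₂ - 1) / Real.Gamma α₂ else 0) -
        (if s ≤ t then (t - s) ^ (α₂ - 1) / Real.Gamma α₂ else 0))
    (hc₁ : c₁ = min
      ((β₁ * Real.Gamma α₁ - (b₁ - η₁) ^ (α₁ - 1)) / ((1 - η₁) ^ (α₁ - 1) - β₁ * Real.Gamma α₁))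
      ((β₁ * Real.Gamma α₁ - (b₁ - η₁) ^ (α₁ - 1)) / (β₁ * Real.Gamma α₁ + η₁ ^ (α₁ - 1))))
    (hc₂ : c₂ = min
      ((β₂ * Real.Gamma α₂ - (b₂ - η₂) ^ (α₂ - 1)) / ((1 - η₂) ^ (α₂ - 1) - β₂ * Real.Gamma α₂))
      ((β₂ * Real.Gamma α₂ - (b₂ - η₂) ^ (α₂ - 1)) / (β₂ * Real.Gamma α₂ + η₂ ^ (α₂ - 1))))
    (f₁ f₂ : ℝ → ℝ → ℝ → ℝ)
    (hf₁ : ContinuousOn (fun p : ℝ × ℝ × ℝ => f₁ p.1 p.2.1 p.2.2)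
      (Set.Icc 0 1 ×ˢ (Set.univ : Set (ℝ × ℝ))))
    (hf₂ : ContinuousOn (fun p : ℝ × ℝ × ℝ => f₂ p.1 p.2.1 p.2.2)
      (Set.Icc 0 1 ×ˢ (Set.univ : Set (ℝ × ℝ))))
    (hf₁nn : ∀ t ∈ Set.Icc (0:ℝ) 1, ∀ x y : ℝ, 0 ≤ f₁ t x y)
    (hf₂nn : ∀ t ∈ Set.Icc (0:ℝ) 1, ∀ x y : ℝ, 0 ≤ f₂ t x y)
    (m₁ m₂ M₁ M₂ : ℝ)
    (hm₁pos : 0 < m₁) (hm₂pos : 0 < m₂)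
    (hm₁ : 1 / m₁ = ⨆ t : Set.Icc (0:ℝ) 1, ∫ s in (0:ℝ)..1, |k₁ t.1 s|)
    (hm₂ : 1 / m₂ = ⨆ t : Set.Icc (0:ℝ) 1, ∫ s in (0:ℝ)..1, |k₂ t.1 s|)
    (hM₁pos : 0 < M₁) (hM₂pos : 0 < M₂)
    (hinf₁pos : 0 < ⨅ t : Set.Icc (0:ℝ) b₁, ∫ s in (0:ℝ)..b₁, k₁ t.1 s)
    (hinf₂pos : 0 < ⨅ t : Set.Icc (0:ℝ) b₂, ∫ s in (0:ℝ)..b₂, k₂ t.1 s)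
    (hM₁ : 1 / M₁ = ⨅ t : Set.Icc (0:ℝ) b₁, ∫ s in (0:ℝ)..b₁, k₁ t.1 s)
    (hM₂ : 1 / M₂ = ⨅ t : Set.Icc (0:ℝ) b₂, ∫ s in (0:ℝ)..b₂, k₂ t.1 s)
    (ρ₁ ρ₂ r₁ r₂ : ℝ) (hρ₁ : 0 < ρ₁) (hρ₂ : 0 < ρ₂) (hr₁pos : 0 < r₁) (hr₂pos : 0 < r₂)
    (hρr₁ : ρ₁ < r₁) (hρr₂ : ρ₂ < r₂)
    (hsmall : ∀ t ∈ Set.Icc (0:ℝ) 1, ∀ x ∈ Set.Icc (-ρ₁) ρ₁, ∀ y ∈ Set.Icc (-ρ₂) ρ₂,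
      f₁ t x y < m₁ * ρ₁ ∧ f₂ t x y < m₂ * ρ₂)
    (hlarge₁ : ∀ t ∈ Set.Icc (0:ℝ) b₁, ∀ x ∈ Set.Icc r₁ (r₁ / c₁),
      ∀ y ∈ Set.Icc (-(r₂ / c₂)) (r₂ / c₂), M₁ * r₁ < f₁ t x y)
    (hlarge₂ : ∀ t ∈ Set.Icc (0:ℝ) b₂, ∀ x ∈ Set.Icc (-(r₁ / c₁)) (r₁ / c₁),
      ∀ y ∈ Set.Icc r₂ (r₂ / c₂), M₂ * r₂ < f₂ t x y) :
    ∃ u v : ℝ → ℝ, inCone 0 b₁ c₁ 0 b₂ c₂ u v ∧ isSolution k₁ k₂ f₁ f₂ u v ∧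
      0 < max (supNorm u) (supNorm v) := by
  obtain rfl : k₁ = fractionalKernel α₁ β₁ η₁ := funext₂ hk₁
  obtain rfl : k₂ = fractionalKernel α₂ β₂ η₂ := funext₂ hk₂
  obtain rfl : c₁ = coneConstant α₁ β₁ η₁ b₁ := hc₁
  obtain rfl : c₂ = coneConstant α₂ β₂ η₂ b₂ := hc₂
  exact fractional_system_existence_general
    ⟨hα₁, hα₁', hη₁.1, hβη₁, hηb₁, hb₁, hβb₁⟩ ⟨hα₂, hα₂', hη₂.1, hβη₂, hηb₂, hb₂, hβb₂⟩
    hf₁ hf₂ hf₁nn hf₂nn hm₁pos hm₂pos hm₁ hm₂ hM₁pos hM₂pos hM₁ hM₂ hρ₁ hρ₂ hr₁pos hr₂pos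
    (fun t ht x hx y hy => (hsmall t ht x hx y hy).imp le_of_lt le_of_lt)
    (fun t ht x hx y hy => (hlarge₁ t ht x hx y hy).le)
    (fun t ht x hx y hy => (hlarge₂ t ht x hx y hy).le)
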